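/- Let ψ, φ : [0,∞) → [0,∞) be non-decreasing functions with ψ(0) = φ(0) = 0, ψ(t) → ∞ and ψ(t)/√t → 0 as t → ∞, and φ(t)/t → 0 as t → ∞. If φ(t) ≥ ψ(t) for all t, then there exists a time T ≥ T₀(φ) such that for all t ≥ T, the spatial gradient ∇_x u(x,t) does not vanish for any x in (CS(h) + φ(t)Bⁿ) \ (CS(h) + ψ(t)Bⁿ). -/

import Mathlib

open Real Set Filter MeasureTheory Metric Pointwise
open scoped Nat Topology

noncomputable section

variable {n : ℕ}

/-- The Laplacian of `v : ℝⁿ → ℝ` at `x`, as the sum of second partial derivatives. -/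
def lap (v : EuclideanSpace ℝ (Fin n) → ℝ) (x : EuclideanSpace ℝ (Fin n)) : ℝ :=
  ∑ i : Fin n, iteratedDeriv 2 (fun a : ℝ => v (x + a • EuclideanSpace.single i (1 : ℝ))) 0

/-- `CS(φ)`: the convex hull of the support of `φ`. -/
def CS (v : EuclideanSpace ℝ (Fin n) → ℝ) : Set (EuclideanSpace ℝ (Fin n)) :=
  convexHull ℝ (tsupport v)

/-- `d_φ`: the diameter of the support of `φ`. -/
def dsupp (v : EuclideanSpace ℝ (Fin n) → ℝ) : ℝ := Metric.diam (tsupport v)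

/-- `δ(K,L) = sup_{η ∈ L} dist(η, K)`. -/
def deltaCC (K L : Set (EuclideanSpace ℝ (Fin n))) : ℝ :=
  sSup ((fun η => Metric.infDist η K) '' L)

/-- The centroid `m_h = (∫ h(y) y dy)/(∫ h(y) dy)`. -/
def centroid (h : EuclideanSpace ℝ (Fin n) → ℝ) : EuclideanSpace ℝ (Fin n) :=
  (∫ y, h y)⁻¹ • ∫ y, h y • y

/-- `T₀(φ) = min{T ≥ 0 : ∀ t ≥ T, t ≥ φ(t) + max{d_h, δ(CS(h),CS(f)) + d_f}}`, `h = f + g`. -/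
def T0 (f g : EuclideanSpace ℝ (Fin n) → ℝ) (phi : ℝ → ℝ) : ℝ :=
  sInf {T : ℝ | 0 ≤ T ∧ ∀ t ≥ T,
    phi t + max (dsupp (f + g)) (deltaCC (CS (f + g)) (CS f) + dsupp f) ≤ t}

/-- Sobolev `W^{ℓ,∞}`-type norm: sum of sup-norms of the iterated derivatives up to order `ℓ`. -/
def sobNorm (ℓ : ℕ) (v : EuclideanSpace ℝ (Fin n) → ℝ) : ℝ :=
  ∑ i ∈ Finset.range (ℓ + 1), ⨆ x, ‖iteratedFDeriv ℝ i v x‖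

/-- The `L¹` norm. -/
def L1norm (v : EuclideanSpace ℝ (Fin n) → ℝ) : ℝ := ∫ y, |v y|

/-- The sup norm. -/
def LinfNorm (v : EuclideanSpace ℝ (Fin n) → ℝ) : ℝ := ⨆ x, |v x|

/-- `𝒞(v)`: the critical points of `v` lying in the interior of its support. -/
def critSet (v : EuclideanSpace ℝ (Fin n) → ℝ) : Set (EuclideanSpace ℝ (Fin n)) :=
  {x | x ∈ interior (tsupport v) ∧ gradient v x = 0}

/-!
If `u` solves the damped wave equation, `w = exp (t / 2) * u` solves `wₜₜ = Δ w + w / 4`. Inside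
the common light cone of its data `w₀ = f` and `w₁ = g + f / 2`, Green's identity against explicit
waves with test functions as velocity data shows that, up to a constant factor,
`w(x, t) = ∫ Φ_b(σ) w₁(y) + 2 t Φ_{b-1}(σ) w₀(y) dy` with `σ = t² - ‖x - y‖²` and `Φ_b` a kernel
of Bessel type satisfying `Φ_b' = Φ_{b-1}`. Let `q` be the nearest point to `x` of the convex hull
of the support of `h = f + g`. As `t → ∞` with `‖x - q‖` small compared to `t`, `2 t Φ_{b-2}(σ)` is
close to `Φ_{b-1}(σ) / 2`, so the derivative of `w` in the direction `x - q` is close to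
`-2 ∫ ⟪x - y, x - q⟫ Φ_{b-1}(σ) h(y) dy`. This is negative because `⟪x - y, x - q⟫ ≥ ‖x - q‖²` on
the support of `h`, and dominates the error because `‖x - q‖` is bounded below.
-/

/-! ### The kernels `Φ_b` -/

section ExponentialGeneratingFunction

/-- The exponential generating function `∑ aᵢ xⁱ / i!` of a real sequence. -/
def expGen (a : ℕ → ℝ) (x : ℝ) : ℝ := ∑' i, a i * (x ^ i / i !)

variable {a : ℕ → ℝ} {C : ℝ}

lemma summable_expGen (ha : ∀ i, |a i| ≤ C) (x : ℝ) :
    Summable fun i => a i * (x ^ i / i !) := by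
  refine Summable.of_norm_bounded (g := fun i => C * (|x| ^ i / i !))
    ((summable_pow_div_factorial |x|).mul_left C) fun i => ?_
  rw [norm_mul, norm_div, norm_pow, norm_eq_abs, norm_eq_abs, norm_natCast]
  exact mul_le_mul_of_nonneg_right (ha i) (by positivity)

lemma succ_mul_div_factorial_succ (y : ℝ) (i : ℕ) :
    ((i + 1 : ℕ) : ℝ) * y / ((i + 1)! : ℕ) = y / i ! := by
  rw [Nat.factorial_succ, Nat.cast_mul, mul_div_mul_left _ _ (by positivity)]

lemma hasSum_expGen_shift (ha : ∀ i, |a i| ≤ C) (x : ℝ) :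
    HasSum (fun i => a i * (i * x ^ (i - 1) / i !)) (expGen (fun i => a (i + 1)) x) := by
  rw [← hasSum_nat_add_iff' 1, expGen]
  simpa only [Finset.sum_range_one, Nat.cast_zero, zero_mul, zero_div, mul_zero, sub_zero,
    Nat.add_sub_cancel, succ_mul_div_factorial_succ] using
    (summable_expGen (a := fun i => a (i + 1)) (fun i => ha (i + 1)) x).hasSum

lemma hasDerivAt_expGen (ha : ∀ i, |a i| ≤ C) (x : ℝ) :
    HasDerivAt (expGen a) (expGen (fun i => a (i + 1)) x) x := by
  have hR : 0 < |x| + 1 := by positivity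
  have hu : Summable fun i : ℕ => C * (i * (|x| + 1) ^ (i - 1) / i !) :=
    (hasSum_expGen_shift (a := fun _ => C) (fun _ => le_rfl) (|x| + 1)).summable
  rw [← (hasSum_expGen_shift ha x).tsum_eq]
  refine hasDerivAt_tsum_of_isPreconnected
    (g := fun i z => a i * (z ^ i / i !)) (g' := fun i z => a i * (i * z ^ (i - 1) / i !))
    (t := ball 0 (|x| + 1)) (y₀ := 0) hu isOpen_ball (convex_ball _ _).isPreconnected
    (fun i z _ => ((hasDerivAt_pow i z).div_const _).const_mul _) (fun i z hz => ?_)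
    (mem_ball_self hR) (summable_expGen ha 0) (by simp)
  rw [mem_ball_zero_iff] at hz
  rw [norm_mul, norm_div, norm_mul, norm_pow, norm_natCast, norm_natCast]
  gcongr
  · exact (abs_nonneg _).trans (ha 0)
  · exact ha i

lemma expGen_add_natCast_mul (ha : ∀ i, |a i| ≤ C) (b x : ℝ) :
    expGen (fun i => (b + i) * a i) x = b * expGen a x + x * expGen (fun i => a (i + 1)) x := by
  refine ((((summable_expGen ha x).hasSum.mul_left b).add
    ((hasSum_expGen_shift ha x).mul_left x)).congr_fun fun i => ?_).tsum_eq
  rcases i with _ | i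
  · simp
  · rw [Nat.add_sub_cancel]
    ring

end ExponentialGeneratingFunction

section BesselKernel

variable {b σ : ℝ}

/-- The coefficients `1 / Γ(b + i + 1)` of the modified Bessel function of order `b`; they vanish
at the poles of `Γ`, where `Real.Gamma` is `0`. -/
def besselCoeff (b : ℝ) (i : ℕ) : ℝ := (Gamma (b + i + 1))⁻¹

lemma inv_Gamma_eq_mul (x : ℝ) : (Gamma x)⁻¹ = x * (Gamma (x + 1))⁻¹ := by
  rcases eq_or_ne x 0 with rfl | hx
  · simp [Gamma_zero]
  · rw [Gamma_add_one hx, mul_inv, mul_inv_cancel_left₀ hx]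

lemma besselCoeff_succ (b : ℝ) (i : ℕ) : besselCoeff b (i + 1) = besselCoeff (b + 1) i := by
  rw [besselCoeff, besselCoeff, Nat.cast_succ, ← add_assoc, add_right_comm b]

lemma besselCoeff_sub_one (b : ℝ) (i : ℕ) :
    besselCoeff (b - 1) i = (b + i) * besselCoeff b i := by
  rw [besselCoeff, besselCoeff, ← inv_Gamma_eq_mul, add_right_comm, sub_add_cancel]

lemma abs_besselCoeff_succ_le {i : ℕ} (hi : 0 ≤ b + i) :
    |besselCoeff b (i + 1)| ≤ |besselCoeff b i| := by
  have hstep : besselCoeff b i = (b + 1 + i) * besselCoeff b (i + 1) := by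
    rw [besselCoeff_succ, ← besselCoeff_sub_one, add_sub_cancel_right]
  rw [hstep, abs_mul]
  exact le_mul_of_one_le_left (abs_nonneg _) (le_abs.2 (Or.inl (by linarith)))

lemma exists_abs_besselCoeff_le (b : ℝ) : ∃ C, ∀ i, |besselCoeff b i| ≤ C := by
  obtain ⟨N, hN⟩ := exists_nat_ge (-b)
  have htail : AntitoneOn (fun i => |besselCoeff b i|) (Ici N) :=
    antitoneOn_of_succ_le ordConnected_Ici fun i _ hi _ =>
      abs_besselCoeff_succ_le (by linarith [show (N : ℝ) ≤ i from mod_cast hi])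
  refine ⟨∑ j ∈ Finset.range (N + 1), |besselCoeff b j|, fun i => ?_⟩
  have hhead : ∀ j ≤ N, |besselCoeff b j| ≤ ∑ j ∈ Finset.range (N + 1), |besselCoeff b j| :=
    fun j hj => Finset.single_le_sum (f := fun j => |besselCoeff b j|) (fun _ _ => abs_nonneg _)
      (Finset.mem_range_succ_iff.2 hj)
  rcases le_total i N with h | h
  · exact hhead i h
  · exact (htail self_mem_Ici h h).trans (hhead N le_rfl)

/-- The entire function `∑ (σ/16)ⁱ / (i! Γ(b+i+1))`. For `σ > 0` it equals
`(4/√σ)ᵇ I_b(√σ/2)`. -/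
def besselEntire (b σ : ℝ) : ℝ := expGen (besselCoeff b) (σ / 16)

lemma hasDerivAt_besselEntire (b σ : ℝ) :
    HasDerivAt (besselEntire b) (besselEntire (b + 1) σ / 16) σ := by
  obtain ⟨C, hC⟩ := exists_abs_besselCoeff_le b
  have h := (hasDerivAt_expGen hC (σ / 16)).comp σ ((hasDerivAt_id σ).div_const 16)
  simp only [besselCoeff_succ, mul_one_div] at h
  exact h

lemma continuous_besselEntire (b : ℝ) : Continuous (besselEntire b) :=
  continuous_iff_continuousAt.2 fun σ => (hasDerivAt_besselEntire b σ).continuousAt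

lemma contDiff_besselEntire (b : ℝ) : ContDiff ℝ (⊤ : ℕ∞) (besselEntire b) := by
  rw [contDiff_infty]
  intro k
  induction k generalizing b with
  | zero => exact contDiff_zero.2 (continuous_besselEntire b)
  | succ k ih =>
    push_cast
    rw [contDiff_succ_iff_deriv, funext fun σ => (hasDerivAt_besselEntire b σ).deriv]
    exact ⟨fun σ => (hasDerivAt_besselEntire b σ).differentiableAt, by simp,
      (ih (b + 1)).div_const 16⟩

lemma besselEntire_sub_one (b σ : ℝ) :
    besselEntire (b - 1) σ = b * besselEntire b σ + σ / 16 * besselEntire (b + 1) σ := by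
  obtain ⟨C, hC⟩ := exists_abs_besselCoeff_le b
  simpa only [besselEntire, ← besselCoeff_sub_one, besselCoeff_succ] using
    expGen_add_natCast_mul hC b (σ / 16)

lemma besselEntire_pos (hb : 0 ≤ b) (hσ : 0 ≤ σ) : 0 < besselEntire b σ := by
  obtain ⟨C, hC⟩ := exists_abs_besselCoeff_le b
  have hcoeff : ∀ i, 0 < besselCoeff b i := fun i => inv_pos.2 (Gamma_pos_of_pos (by positivity))
  refine (summable_expGen hC (σ / 16)).tsum_pos
    (fun i => mul_nonneg (hcoeff i).le (by positivity)) 0 ?_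
  simpa using hcoeff 0

/-- The profile `Φ_b(σ) = σ₊ᵇ ∑ (σ/16)ⁱ / (i! Γ(b+i+1))`. With `β = (1 - dim E) / 2`,
`Φ_β(t² - |x|²)` is a multiple of the fundamental solution of `∂ₜ² - Δ - 1/4` inside the light
cone. -/
def besselKernel (b σ : ℝ) : ℝ := max σ 0 ^ b * besselEntire b σ

lemma besselKernel_of_pos (b : ℝ) (hσ : 0 < σ) :
    besselKernel b σ = σ ^ b * besselEntire b σ := by
  rw [besselKernel, max_eq_left hσ.le]

lemma besselKernel_of_nonpos (hb : b ≠ 0) (hσ : σ ≤ 0) : besselKernel b σ = 0 := by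
  rw [besselKernel, max_eq_right hσ, zero_rpow hb, zero_mul]

lemma continuous_besselKernel (hb : 0 ≤ b) : Continuous (besselKernel b) :=
  ((continuous_id.max continuous_const).rpow_const fun _ => Or.inr hb).mul
    (continuous_besselEntire b)

lemma besselKernel_pos (hb : 0 ≤ b) (hσ : 0 < σ) : 0 < besselKernel b σ := by
  rw [besselKernel_of_pos b hσ]
  exact mul_pos (rpow_pos_of_pos hσ _) (besselEntire_pos hb hσ.le)

lemma mul_besselKernel_sub_one (b : ℝ) (hσ : 0 < σ) :
    σ * besselKernel (b - 1) σ = b * besselKernel b σ + besselKernel (b + 1) σ / 16 := by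
  simp only [besselKernel_of_pos _ hσ, besselEntire_sub_one, rpow_sub_one hσ.ne',
    rpow_add_one hσ.ne']
  field_simp

lemma mul_besselKernel_sub_one_of_one_lt (hb : 1 < b) (σ : ℝ) :
    σ * besselKernel (b - 1) σ = b * besselKernel b σ + besselKernel (b + 1) σ / 16 := by
  rcases le_or_gt σ 0 with hσ | hσ
  · rw [besselKernel_of_nonpos (by linarith) hσ, besselKernel_of_nonpos (by linarith) hσ,
      besselKernel_of_nonpos (by linarith) hσ]
    simp
  · exact mul_besselKernel_sub_one b hσ

lemma hasDerivAt_besselKernel_of_pos (b : ℝ) (hσ : 0 < σ) :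
    HasDerivAt (besselKernel b) (besselKernel (b - 1) σ) σ := by
  have h := ((hasDerivAt_rpow_const (p := b) (Or.inl hσ.ne')).mul
    (hasDerivAt_besselEntire b σ)).congr_of_eventuallyEq <|
      (eventually_gt_nhds hσ).mono fun y hy => besselKernel_of_pos b hy
  refine h.congr_deriv ?_
  rw [besselKernel_of_pos _ hσ, besselEntire_sub_one, rpow_sub_one hσ.ne']
  field_simp

lemma hasDerivAt_besselKernel (hb : 1 < b) (σ : ℝ) :
    HasDerivAt (besselKernel b) (besselKernel (b - 1) σ) σ := by
  refine hasDerivAt_of_hasDerivAt_of_ne' (x := 0) (g := besselKernel (b - 1)) (fun y hy => ?_)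
    (continuous_besselKernel (by linarith)).continuousAt
    (continuous_besselKernel (by linarith)).continuousAt σ
  rcases lt_or_gt_of_ne hy with h | h
  · rw [besselKernel_of_nonpos (by linarith) h.le]
    exact (hasDerivAt_const y (0 : ℝ)).congr_of_eventuallyEq <|
      (eventually_lt_nhds h).mono fun z hz => besselKernel_of_nonpos (by linarith) hz.le
  · exact hasDerivAt_besselKernel_of_pos b h

end BesselKernel

section BesselAsymptotics

variable {b σ : ℝ}

lemma besselKernel_sq_le (hb : 2 < b) (hσ : 0 ≤ σ) :
    besselKernel b σ ^ 2 / 16 ≤ σ * besselKernel (b - 1) σ ^ 2 := by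
  set D : ℝ → ℝ := fun σ => σ * besselKernel (b - 1) σ ^ 2 - besselKernel b σ ^ 2 / 16 with hD
  have hderiv (x : ℝ) (hx : 0 < x) : HasDerivAt D ((2 * b - 1) * besselKernel (b - 1) x ^ 2) x := by
    have h1 := hasDerivAt_besselKernel_of_pos (b - 1) hx
    have h2 := hasDerivAt_besselKernel_of_pos b hx
    have hrec := mul_besselKernel_sub_one (b - 1) hx
    rw [sub_add_cancel] at hrec
    refine (((hasDerivAt_id x).mul (h1.pow 2)).sub ((h2.pow 2).div_const 16)).congr_deriv ?_
    simp only [id, Pi.pow_apply]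
    norm_num
    linear_combination (2 * besselKernel (b - 1) x) * hrec
  have hcont : Continuous D :=
    (continuous_id.mul ((continuous_besselKernel (by linarith)).pow 2)).sub
      (((continuous_besselKernel (by linarith)).pow 2).div_const 16)
  have hmono : MonotoneOn D (Ici 0) := by
    refine monotoneOn_of_hasDerivWithinAt_nonneg (convex_Ici 0) hcont.continuousOn
      (fun x hx => (hderiv x (by simpa using hx)).hasDerivWithinAt)
      fun x _ => mul_nonneg (by linarith) (sq_nonneg _)
  have h0 : D 0 = 0 := by
    simp [hD, besselKernel_of_nonpos (show b ≠ 0 by linarith) le_rfl]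
  exact sub_nonneg.1 (h0 ▸ hmono self_mem_Ici hσ hσ)

lemma quarter_le_besselKernel_ratio (hb : 2 < b) (hσ : 0 < σ) :
    1 / 4 ≤ √σ * besselKernel (b - 1) σ / besselKernel b σ := by
  have h0 := besselKernel_pos (b := b) (by linarith) hσ
  have h1 := besselKernel_pos (b := b - 1) (by linarith) hσ
  rw [le_div_iff₀ h0]
  refine le_of_sq_le_sq ?_ (by positivity)
  rw [mul_pow, mul_pow, sq_sqrt hσ.le]
  linarith [besselKernel_sq_le hb hσ.le]

lemma besselKernel_ratio_eq (hσ : 0 < σ) (hpos : besselKernel b σ ≠ 0) :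
    √σ * besselKernel (b - 1) σ / besselKernel b σ
      = b / √σ + 1 / 16 * (√σ * besselKernel b σ / besselKernel (b + 1) σ)⁻¹ := by
  have hs : √σ ≠ 0 := (sqrt_pos.2 hσ).ne'
  field_simp
  rw [sq_sqrt hσ.le]
  linear_combination 16 * mul_besselKernel_sub_one b hσ

/-- The asymptotic regime `Φ_b > 0` and `√σ Φ_{b-1} / Φ_b → 1/4` as `σ → ∞`. -/
structure IsBesselAsymptotic (b : ℝ) : Prop where
  eventually_pos : ∀ᶠ σ in atTop, 0 < besselKernel b σ
  tendsto_ratio :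
    Tendsto (fun σ => √σ * besselKernel (b - 1) σ / besselKernel b σ) atTop (𝓝 (1 / 4))

lemma tendsto_div_sqrt_atTop (b : ℝ) : Tendsto (fun σ : ℝ => b / √σ) atTop (𝓝 0) :=
  tendsto_const_nhds.div_atTop tendsto_sqrt_atTop

lemma isBesselAsymptotic_of_two_lt (hb : 2 < b) : IsBesselAsymptotic b := by
  have hupper (σ : ℝ) (hσ : 0 < σ) :
      √σ * besselKernel (b - 1) σ / besselKernel b σ ≤ b / √σ + 1 / 4 := by
    have h := quarter_le_besselKernel_ratio (b := b + 1) (by linarith) hσ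
    rw [add_sub_cancel_right] at h
    rw [besselKernel_ratio_eq hσ (besselKernel_pos (by linarith) hσ).ne']
    linarith [inv_anti₀ (by norm_num) h]
  have hlim : Tendsto (fun σ : ℝ => b / √σ + 1 / 4) atTop (𝓝 (1 / 4)) := by
    simpa only [zero_add] using (tendsto_div_sqrt_atTop b).add_const (1 / 4)
  exact ⟨(eventually_gt_atTop 0).mono fun σ hσ => besselKernel_pos (by linarith) hσ,
    tendsto_of_tendsto_of_tendsto_of_le_of_le' tendsto_const_nhds hlim
      ((eventually_gt_atTop 0).mono fun σ hσ => quarter_le_besselKernel_ratio hb hσ)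
      ((eventually_gt_atTop 0).mono hupper)⟩

lemma IsBesselAsymptotic.sub_one (h : IsBesselAsymptotic b) : IsBesselAsymptotic (b - 1) := by
  have hpos : ∀ᶠ σ in atTop, 0 < besselKernel (b - 1) σ := by
    filter_upwards [h.eventually_pos,
      h.tendsto_ratio.eventually_const_lt (show (0 : ℝ) < 1 / 4 by norm_num),
      eventually_gt_atTop 0] with σ hΦ hratio hσ
    exact (mul_pos_iff_of_pos_left (sqrt_pos.2 hσ)).1 ((div_pos_iff_of_pos_right hΦ).1 hratio)
  refine ⟨hpos, ?_⟩
  have hlim := (tendsto_div_sqrt_atTop (b - 1)).add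
    ((h.tendsto_ratio.inv₀ (by norm_num)).const_mul (1 / 16))
  norm_num only at hlim
  refine hlim.congr' ?_
  filter_upwards [hpos, eventually_gt_atTop 0] with σ hΦ hσ
  rw [besselKernel_ratio_eq hσ hΦ.ne', sub_add_cancel]

/-- Large orders are handled by the sign of the derivative of `σ Φ_{b-1}² - Φ_b² / 16`; the
recurrence then lowers the order. -/
theorem isBesselAsymptotic (b : ℝ) : IsBesselAsymptotic b := by
  obtain ⟨k, hk⟩ := exists_nat_gt (2 - b)
  have hlower (j : ℕ) : IsBesselAsymptotic (b + k - j) := by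
    induction j with
    | zero => exact isBesselAsymptotic_of_two_lt (by push_cast; linarith)
    | succ j ih =>
      rw [Nat.cast_succ, ← sub_sub]
      exact ih.sub_one
  simpa using hlower k

/-- Uniform asymptotics on `s`: `Φ_b > 0`, and `2 t Φ_{b-1}` equals `Φ_b / 2` up to the relative
error `δ`. -/
structure IsBalancedOn (b δ t : ℝ) (s : Set ℝ) : Prop where
  pos : ∀ σ ∈ s, 0 < besselKernel b σ
  abs_sub_le : ∀ σ ∈ s,
    |2 * t * besselKernel (b - 1) σ - besselKernel b σ / 2| ≤ δ * besselKernel b σ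

lemma IsBalancedOn.mono {δ t : ℝ} {s s' : Set ℝ} (h : IsBalancedOn b δ t s) (hs : s' ⊆ s) :
    IsBalancedOn b δ t s' :=
  ⟨fun σ hσ => h.pos σ (hs hσ), fun σ hσ => h.abs_sub_le σ (hs hσ)⟩

lemma div_sqrt_mem_Icc {t η : ℝ} (ht : 0 < t) (hη : 0 < η) (hη' : η ≤ 1 / 4)
    (hσ : σ ∈ Icc ((1 - η) * t ^ 2) (t ^ 2)) : t / √σ ∈ Icc 1 (1 + 2 * η) := by
  have hσ0 : 0 < σ := hσ.1.trans_lt' (mul_pos (by linarith) (by positivity))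
  have hs : 0 < √σ := sqrt_pos.2 hσ0
  refine ⟨(one_le_div hs).2 (sqrt_le_iff.2 ⟨ht.le, hσ.2⟩), ?_⟩
  rw [div_le_iff₀ hs, ← sqrt_sq (show 0 ≤ 1 + 2 * η by linarith), ← sqrt_mul (by positivity)]
  refine le_sqrt_of_sq_le ?_
  calc t ^ 2 ≤ (1 + 2 * η) ^ 2 * (1 - η) * t ^ 2 :=
        le_mul_of_one_le_left (by positivity) (by
          nlinarith [mul_nonneg (sq_nonneg η) (sub_nonneg.2 hη')])
    _ = (1 + 2 * η) ^ 2 * ((1 - η) * t ^ 2) := by ring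
    _ ≤ (1 + 2 * η) ^ 2 * σ := by gcongr; exact hσ.1

lemma eventually_isBalancedOn (b : ℝ) {δ : ℝ} (hδ : 0 < δ) :
    ∃ η > 0, ∀ᶠ t in atTop, IsBalancedOn b δ t (Icc ((1 - η) * t ^ 2) (t ^ 2)) := by
  have hη : 0 < min (δ / 6) (1 / 4) := by positivity
  have hη6 : 6 * min (δ / 6) (1 / 4) ≤ δ := by linarith [min_le_left (δ / 6) (1 / 4)]
  have hη4 := min_le_right (δ / 6) (1 / 4)
  set η := min (δ / 6) (1 / 4)
  obtain ⟨s₀, hs₀⟩ := eventually_atTop.1 ((isBesselAsymptotic b).eventually_pos.and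
    (Metric.tendsto_nhds.1 (isBesselAsymptotic b).tendsto_ratio η hη))
  have hlarge : Tendsto (fun t : ℝ => (1 - η) * t ^ 2) atTop atTop :=
    (tendsto_pow_atTop two_ne_zero).const_mul_atTop (by linarith)
  refine ⟨η, hη, ?_⟩
  filter_upwards [hlarge.eventually_ge_atTop s₀, eventually_gt_atTop 0] with t ht ht0
  refine ⟨fun σ hσ => (hs₀ σ (ht.trans hσ.1)).1, fun σ hσ => ?_⟩
  obtain ⟨hΦ, hratio⟩ := hs₀ σ (ht.trans hσ.1)
  have hσ0 : 0 < σ := hσ.1.trans_lt' (mul_pos (by linarith) (by positivity))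
  have hs : √σ ≠ 0 := (sqrt_pos.2 hσ0).ne'
  have hdecomp : 2 * t * besselKernel (b - 1) σ - besselKernel b σ / 2
      = (2 * (t / √σ) * (√σ * besselKernel (b - 1) σ / besselKernel b σ) - 1 / 2)
        * besselKernel b σ := by
    field_simp
  obtain ⟨hκ1, hκ2⟩ := div_sqrt_mem_Icc ht0 hη hη4 hσ
  obtain ⟨hq1, hq2⟩ := abs_lt.1 hratio
  rw [hdecomp, abs_mul, abs_of_pos hΦ]
  refine mul_le_mul_of_nonneg_right (abs_le.2 ⟨?_, ?_⟩) hΦ.le <;> nlinarith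

/-- Grönwall's inequality, obtained by integrating the logarithmic derivative. -/
lemma le_exp_mul_of_abs_deriv_le {F F' : ℝ → ℝ} {s : Set ℝ} {L τ : ℝ} (hs : Convex ℝ s)
    (hF : ∀ x ∈ s, HasDerivWithinAt F (F' x) s x) (hpos : ∀ x ∈ s, 0 < F x)
    (hL : ∀ x ∈ s, |F' x| ≤ L * F x) (hσ : σ ∈ s) (hτ : τ ∈ s) :
    F τ ≤ exp (L * |τ - σ|) * F σ := by
  have hlog := hs.norm_image_sub_le_of_norm_hasDerivWithin_le
    (fun x hx => (hF x hx).log (hpos x hx).ne') (C := L) (fun x hx => by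
      rw [norm_div, norm_eq_abs, norm_eq_abs, abs_of_pos (hpos x hx), div_le_iff₀ (hpos x hx)]
      exact hL x hx) hσ hτ
  rw [← log_le_log_iff (hpos τ hτ) (mul_pos (exp_pos _) (hpos σ hσ)),
    log_mul (exp_pos _).ne' (hpos σ hσ).ne', log_exp]
  exact sub_le_iff_le_add.1 ((le_abs_self _).trans hlog)

lemma IsBalancedOn.le_two_mul {δ t τ : ℝ} {s : Set ℝ} (h : IsBalancedOn b δ t s) (hδ : δ ≤ 1 / 2)
    (ht : 0 < t) (hs : Convex ℝ s) (hs0 : s ⊆ Ioi 0) (hσ : σ ∈ s) (hτ : τ ∈ s)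
    (hστ : |τ - σ| ≤ t) : besselKernel b τ ≤ 2 * besselKernel b σ := by
  have hderiv (x) (hx : x ∈ s) : |besselKernel (b - 1) x| ≤ 1 / (2 * t) * besselKernel b x := by
    obtain ⟨h1, h2⟩ := abs_le.1 (h.abs_sub_le x hx)
    have hδΦ := mul_le_mul_of_nonneg_right hδ (h.pos x hx).le
    rw [one_div_mul_eq_div, le_div_iff₀ (by positivity), mul_comm,
      ← abs_of_pos (show 0 < 2 * t by positivity), ← abs_mul, abs_le]
    have := h.pos x hx
    constructor <;> linarith
  have hexp : exp (1 / (2 * t) * |τ - σ|) ≤ 2 := by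
    rw [← le_log_iff_exp_le two_pos, one_div_mul_eq_div, div_le_iff₀ (by positivity)]
    nlinarith [log_two_gt_d9]
  calc besselKernel b τ ≤ exp (1 / (2 * t) * |τ - σ|) * besselKernel b σ :=
        le_exp_mul_of_abs_deriv_le hs
          (fun x hx => (hasDerivAt_besselKernel_of_pos b (hs0 hx)).hasDerivWithinAt) h.pos
          hderiv hσ hτ
    _ ≤ 2 * besselKernel b σ := mul_le_mul_of_nonneg_right hexp (h.pos σ hσ).le

end BesselAsymptotics

/-! ### Derivatives in space-time -/

section DirDeriv

open scoped ContDiff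

variable {V : Type*} [NormedAddCommGroup V] [NormedSpace ℝ V] {F G : V → ℝ} {e p : V}

/-- The directional derivative `∂ₑF`, as an operator on functions. It is a line derivative, so it
only depends on `F` along lines parallel to `e`. -/
def dirDeriv (e : V) (F : V → ℝ) (p : V) : ℝ := lineDeriv ℝ F p e

lemma hasDerivAt_comp_line {F' s : ℝ} (hF : HasLineDerivAt ℝ F F' (p + s • e) e) :
    HasDerivAt (fun r : ℝ => F (p + r • e)) F' s := by
  rw [HasLineDerivAt, ← sub_self s] at hF
  refine hF.comp_sub_const.congr_of_eventuallyEq (Eventually.of_forall fun r => ?_)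
  simp only [add_assoc, ← add_smul, add_sub_cancel]

lemma hasLineDerivAt_mul {F' G' : ℝ} (hF : HasLineDerivAt ℝ F F' p e)
    (hG : HasLineDerivAt ℝ G G' p e) :
    HasLineDerivAt ℝ (fun q => F q * G q) (F' * G p + F p * G') p e := by
  simpa [HasLineDerivAt] using HasDerivAt.fun_mul hF hG

lemma hasLineDerivAt_comp {k : ℝ → ℝ} {k' F' : ℝ} (hk : HasDerivAt k k' (F p))
    (hF : HasLineDerivAt ℝ F F' p e) : HasLineDerivAt ℝ (fun q => k (F q)) (k' * F') p e :=
  HasDerivAt.comp_of_eq (0 : ℝ) hk hF (by simp)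

lemma dirDeriv_eq_fderiv (hF : ContDiff ℝ ∞ F) (e : V) :
    dirDeriv e F = fun p => fderiv ℝ F p e :=
  funext fun p => (hF.differentiable (by simp) p).lineDeriv_eq_fderiv

lemma contDiff_dirDeriv (hF : ContDiff ℝ ∞ F) (e : V) : ContDiff ℝ ∞ (dirDeriv e F) := by
  rw [dirDeriv_eq_fderiv hF]
  exact (hF.fderiv_right (by simp)).clm_apply contDiff_const

lemma contDiffAt_dirDeriv {k : ℕ} (hF : ContDiffAt ℝ (k + 1 : ℕ) F p) (e : V) :
    ContDiffAt ℝ k (dirDeriv e F) p :=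
  ((hF.fderiv_right (m := k) (by norm_cast)).clm_apply contDiffAt_const).congr_of_eventuallyEq
    ((hF.eventually (by simp)).mono fun _ hq =>
      (hq.differentiableAt (by simp)).lineDeriv_eq_fderiv)

lemma dirDeriv_comm (hF : ContDiff ℝ ∞ F) (e e' : V) :
    dirDeriv e (dirDeriv e' F) = dirDeriv e' (dirDeriv e F) := by
  have hd : Differentiable ℝ (fderiv ℝ F) :=
    (hF.fderiv_right (m := ∞) (by simp)).differentiable (by simp)
  have hiter (a b p : V) : dirDeriv a (dirDeriv b F) p = fderiv ℝ (fderiv ℝ F) p a b := by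
    rw [dirDeriv_eq_fderiv (contDiff_dirDeriv hF b)]
    simp only [dirDeriv_eq_fderiv hF b]
    rw [fderiv_clm_apply (hd p) (differentiableAt_const b)]
    simp
  funext p
  have hsymm : IsSymmSndFDerivAt ℝ F p := hF.contDiffAt.isSymmSndFDerivAt (by
    simpa using WithTop.coe_le_coe.2 (le_top : (2 : ℕ∞) ≤ ⊤))
  rw [hiter, hiter, hsymm.eq]

lemma dirDeriv_congr (h : F =ᶠ[𝓝 p] G) (e : V) : dirDeriv e F =ᶠ[𝓝 p] dirDeriv e G :=
  h.eventuallyEq_nhds.mono fun _ hq => hq.lineDeriv_eq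

lemma dirDeriv_add (hF : DifferentiableAt ℝ F p) (hG : DifferentiableAt ℝ G p) :
    dirDeriv e (fun q => F q + G q) p = dirDeriv e F p + dirDeriv e G p := by
  rw [dirDeriv, (hF.fun_add hG).lineDeriv_eq_fderiv, fderiv_fun_add hF hG, dirDeriv, dirDeriv,
    hF.lineDeriv_eq_fderiv, hG.lineDeriv_eq_fderiv, add_apply]

end DirDeriv

section SpaceTime

open scoped ContDiff

variable {E : Type*} [NormedAddCommGroup E] [InnerProductSpace ℝ E]

/-- The time derivative of a function on space-time `E × ℝ`. -/
def timeDeriv (F : E × ℝ → ℝ) : E × ℝ → ℝ := dirDeriv (0, 1) F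

variable {F G : E × ℝ → ℝ} {p : E × ℝ} {a : ℝ → ℝ}

lemma timeDeriv_eq_deriv (F : E × ℝ → ℝ) (p : E × ℝ) :
    timeDeriv F p = deriv (fun τ => F (p.1, τ)) p.2 := by
  simp only [timeDeriv, dirDeriv, lineDeriv, Prod.add_def, Prod.smul_fst, Prod.smul_snd, smul_zero,
    add_zero, smul_eq_mul, mul_one]
  rw [deriv_comp_const_add (fun τ => F (p.1, τ)), add_zero]

lemma contDiff_timeDeriv (hF : ContDiff ℝ ∞ F) : ContDiff ℝ ∞ (timeDeriv F) :=
  contDiff_dirDeriv hF _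

lemma hasDerivAt_timeDeriv_of_differentiableAt {x : E} {τ : ℝ}
    (hF : DifferentiableAt ℝ F (x, τ)) :
    HasDerivAt (fun s => F (x, s)) (timeDeriv F (x, τ)) τ := by
  rw [timeDeriv_eq_deriv]
  exact (hF.comp τ (by fun_prop : DifferentiableAt ℝ (fun s : ℝ => (x, s)) τ)).hasDerivAt

lemma hasDerivAt_timeDeriv (hF : ContDiff ℝ ∞ F) (x : E) (τ : ℝ) :
    HasDerivAt (fun s => F (x, s)) (timeDeriv F (x, τ)) τ :=
  hasDerivAt_timeDeriv_of_differentiableAt (hF.differentiable (by simp) _)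

lemma timeDeriv_snd_mul {a' : ℝ} (ha : HasDerivAt a a' p.2) (hF : DifferentiableAt ℝ F p) :
    timeDeriv (fun q => a q.2 * F q) p = a' * F p + a p.2 * timeDeriv F p := by
  rw [timeDeriv_eq_deriv]
  exact (ha.mul (hasDerivAt_timeDeriv_of_differentiableAt hF)).deriv

lemma dirDeriv_space_snd_mul (a : ℝ → ℝ) (F : E × ℝ → ℝ) (e : E) :
    dirDeriv (e, 0) (fun q => a q.2 * F q) = fun q => a q.2 * dirDeriv (e, 0) F q := by
  funext p
  simp only [dirDeriv, lineDeriv, Prod.snd_add, Prod.smul_snd, smul_zero, add_zero]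
  exact deriv_const_mul_field _

lemma dirDeriv_space_eq_dirDeriv_slice (F : E × ℝ → ℝ) (e : E) (t : ℝ) :
    (fun x => dirDeriv (e, 0) F (x, t)) = dirDeriv e fun x => F (x, t) := by
  funext x
  simp only [dirDeriv, lineDeriv, Prod.mk_add_mk, Prod.smul_mk, smul_zero, add_zero]

variable [FiniteDimensional ℝ E]

/-- The Laplacian in the space variable of a function on space-time `E × ℝ`. -/
def spaceLap (F : E × ℝ → ℝ) (p : E × ℝ) : ℝ :=
  ∑ i, dirDeriv (stdOrthonormalBasis ℝ E i, 0) (dirDeriv (stdOrthonormalBasis ℝ E i, 0) F) p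

/-- The operator `Δ + 1/4`, acting in the space variable: `∂ₜ² = Δ + 1/4` is the equation satisfied
by `e^{t/2} u` when `u` solves the damped wave equation. -/
def lapQuarter (F : E × ℝ → ℝ) (p : E × ℝ) : ℝ := spaceLap F p + F p / 4

lemma contDiff_spaceLap (hF : ContDiff ℝ ∞ F) : ContDiff ℝ ∞ (spaceLap F) :=
  ContDiff.sum fun _ _ => contDiff_dirDeriv (contDiff_dirDeriv hF _) _

lemma contDiff_lapQuarter (hF : ContDiff ℝ ∞ F) : ContDiff ℝ ∞ (lapQuarter F) :=
  (contDiff_spaceLap hF).add (hF.div_const 4)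

lemma lapQuarter_congr (h : F =ᶠ[𝓝 p] G) : lapQuarter F p = lapQuarter G p := by
  simp only [lapQuarter, spaceLap, h.eq_of_nhds,
    (dirDeriv_congr (dirDeriv_congr h _) _).eq_of_nhds]

lemma lapQuarter_snd_mul (a : ℝ → ℝ) (F : E × ℝ → ℝ) (p : E × ℝ) :
    lapQuarter (fun q => a q.2 * F q) p = a p.2 * lapQuarter F p := by
  simp only [lapQuarter, spaceLap, dirDeriv_space_snd_mul, ← Finset.mul_sum]
  ring

lemma lapQuarter_add (hF : ContDiff ℝ ∞ F) (hG : ContDiff ℝ ∞ G) (p : E × ℝ) :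
    lapQuarter (fun q => F q + G q) p = lapQuarter F p + lapQuarter G p := by
  have hadd {F G : E × ℝ → ℝ} (hF : ContDiff ℝ ∞ F) (hG : ContDiff ℝ ∞ G) (e : E × ℝ) :
      dirDeriv e (fun q => F q + G q) = fun q => dirDeriv e F q + dirDeriv e G q :=
    funext fun q => dirDeriv_add (hF.differentiable (by simp) q) (hG.differentiable (by simp) q)
  simp only [lapQuarter, spaceLap, hadd hF hG,
    hadd (contDiff_dirDeriv hF _) (contDiff_dirDeriv hG _), Finset.sum_add_distrib]
  ring

lemma timeDeriv_lapQuarter (hF : ContDiff ℝ ∞ F) :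
    timeDeriv (lapQuarter F) = lapQuarter (timeDeriv F) := by
  have hcomm (e : E) : timeDeriv (dirDeriv (e, 0) (dirDeriv (e, 0) F))
      = dirDeriv (e, 0) (dirDeriv (e, 0) (timeDeriv F)) := by
    rw [timeDeriv, dirDeriv_comm (contDiff_dirDeriv hF _), dirDeriv_comm hF, timeDeriv]
  funext ⟨x, τ⟩
  rw [timeDeriv_eq_deriv]
  refine HasDerivAt.deriv ?_
  simp only [lapQuarter, spaceLap, ← hcomm]
  exact (HasDerivAt.fun_sum fun i _ =>
    hasDerivAt_timeDeriv (contDiff_dirDeriv (contDiff_dirDeriv hF _) _) x τ).add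
      ((hasDerivAt_timeDeriv hF x τ).div_const 4)

end SpaceTime

section ParametricIntegral

open scoped ContDiff

lemma hasDerivAt_setIntegral_of_isCompact {α : Type*} [TopologicalSpace α] [MeasurableSpace α]
    [OpensMeasurableSpace α] [T2Space α] {μ : Measure α} [IsFiniteMeasureOnCompacts μ]
    {K : Set α} (hK : IsCompact K) {F F' : ℝ → α → ℝ} {S : Set ℝ} (hS : IsOpen S)
    (hF : ∀ t ∈ S, ContinuousOn (F t) K)
    (hF' : ContinuousOn (Function.uncurry F') (S ×ˢ K))
    (hd : ∀ t ∈ S, ∀ x ∈ K, HasDerivAt (fun t => F t x) (F' t x) t) {t₀ : ℝ} (ht₀ : t₀ ∈ S) :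
    HasDerivAt (fun t => ∫ x in K, F t x ∂μ) (∫ x in K, F' t₀ x ∂μ) t₀ := by
  obtain ⟨ε, hε, hεS⟩ := Metric.nhds_basis_closedBall.mem_iff.1 (hS.mem_nhds ht₀)
  obtain ⟨C, hC⟩ := ((isCompact_closedBall t₀ ε).prod hK).exists_bound_of_continuousOn
    (hF'.mono (prod_mono hεS subset_rfl))
  have hKm : MeasurableSet K := hK.measurableSet
  have hF't₀ : ContinuousOn (F' t₀) K :=
    hF'.comp (f := fun x => (t₀, x)) (by fun_prop) fun x hx => ⟨ht₀, hx⟩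
  refine (hasDerivAt_integral_of_dominated_loc_of_deriv_le (μ := μ.restrict K)
    (bound := fun _ => C) (closedBall_mem_nhds t₀ hε) ?_ ((hF t₀ ht₀).integrableOn_compact hK)
    (hF't₀.aestronglyMeasurable_of_isCompact hK hKm) ?_
    (integrableOn_const (hs := hK.measure_lt_top.ne)) ?_).2
  · filter_upwards [hS.mem_nhds ht₀] with t ht
    exact (hF t ht).aestronglyMeasurable_of_isCompact hK hKm
  · filter_upwards [ae_restrict_mem hKm] with x hx t ht using hC (t, x) ⟨ht, hx⟩
  · filter_upwards [ae_restrict_mem hKm] with x hx t ht using hd t (hεS ht) x hx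

lemma hasLineDerivAt_integral_mul {V α : Type*} [NormedAddCommGroup V] [NormedSpace ℝ V]
    [TopologicalSpace α] [MeasurableSpace α] [OpensMeasurableSpace α] [T2Space α] {μ : Measure α}
    [IsFiniteMeasureOnCompacts μ] {χ : α → ℝ} (hχ : Continuous χ) (hχc : HasCompactSupport χ)
    {T : Set V} (hT : IsOpen T) {G G' : V → α → ℝ} {p e : V} (hp : p ∈ T)
    (hG : ContinuousOn (Function.uncurry G) (T ×ˢ tsupport χ))
    (hG' : ContinuousOn (Function.uncurry G') (T ×ˢ tsupport χ))
    (hd : ∀ q ∈ T, ∀ z ∈ tsupport χ, HasLineDerivAt ℝ (fun q => G q z) (G' q z) q e) :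
    HasLineDerivAt ℝ (fun q => ∫ z, G q z * χ z ∂μ) (∫ z, G' p z * χ z ∂μ) p e := by
  have hsupp (F : α → ℝ) : ∫ z in tsupport χ, F z * χ z ∂μ = ∫ z, F z * χ z ∂μ :=
    setIntegral_eq_integral_of_forall_compl_eq_zero fun z hz => by
      rw [image_eq_zero_of_notMem_tsupport hz, mul_zero]
  have hχ' {s : Set (ℝ × α)} : ContinuousOn (fun q => χ q.2) s := by fun_prop
  have h := hasDerivAt_setIntegral_of_isCompact (μ := μ) hχc
    (hT.preimage (by fun_prop : Continuous fun s : ℝ => p + s • e))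
    (F := fun s z => G (p + s • e) z * χ z) (F' := fun s z => G' (p + s • e) z * χ z)
    (fun s hs => (hG.comp (f := fun z => (p + s • e, z)) (by fun_prop)
      fun z hz => ⟨hs, hz⟩).mul hχ.continuousOn)
    ((hG'.comp (f := fun q : ℝ × α => (p + q.1 • e, q.2)) (by fun_prop)
      fun q hq => ⟨hq.1, hq.2⟩).mul hχ')
    (fun s hs z hz => (hasDerivAt_comp_line (hd _ hs z hz)).mul_const (χ z))
    (t₀ := 0) (by simpa using hp)
  simpa only [HasLineDerivAt, hsupp, zero_smul, add_zero] using h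

lemma contDiff_integral_unitBall {P X : Type*} [NormedAddCommGroup P] [NormedSpace ℝ P]
    [NormedAddCommGroup X] [InnerProductSpace ℝ X] [FiniteDimensional ℝ X] [MeasurableSpace X]
    [BorelSpace X] {μ : Measure X} [μ.IsAddHaarMeasure] {k : X → ℝ}
    (hkc : Continuous k) (hk : ∀ y, 1 ≤ ‖y‖ → k y = 0) {F : P × X → ℝ} (hF : ContDiff ℝ ∞ F) :
    ContDiff ℝ ∞ (fun p => ∫ y, k y * F (p, y) ∂μ) := by
  let χ : ContDiffBump (0 : X) := ⟨1, 2, one_pos, one_lt_two⟩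
  have hχF : ContDiff ℝ ∞ fun q : P × X => χ q.2 * F (q.1, -q.2) :=
    (χ.contDiff.comp contDiff_snd).mul (hF.comp (contDiff_fst.prodMk contDiff_snd.neg))
  have hconv := contDiffOn_convolution_right_with_param (𝕜 := ℝ) (μ := μ) (n := ⊤)
    (ContinuousLinearMap.mul ℝ ℝ) (f := k)
    (g := fun (p : P) (y : X) => χ y * F (p, -y)) (s := univ) (k := closedBall (0 : X) 2)
    isOpen_univ (isCompact_closedBall 0 2)
    (fun p y _ hy => by
      rw [χ.zero_of_le_dist (not_le.1 (mem_closedBall.not.1 hy)).le, zero_mul])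
    hkc.locallyIntegrable hχF.contDiffOn
  rw [univ_prod_univ, contDiffOn_univ] at hconv
  convert hconv.comp ((contDiff_id (E := P)).prodMk (contDiff_const (c := (0 : X)))) using 1
  funext p
  simp only [Function.comp, convolution_def, ContinuousLinearMap.mul_apply', id, zero_sub, neg_neg]
  refine integral_congr_ae (Eventually.of_forall fun y => ?_)
  rcases le_or_gt 1 ‖y‖ with hy | hy
  · simp [hk y hy]
  · have hχy : χ (-y) = 1 := χ.one_of_mem_closedBall (by simpa using hy.le)
    simp [hχy]

end ParametricIntegral

/-! ### Potentials and the Euler–Poisson–Darboux equation -/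

section Potential

open scoped ContDiff InnerProductSpace

variable {E : Type*} [NormedAddCommGroup E]

/-- The Lorentzian quadratic form `τ² - |x - z|²`, measured from the event `(z, 0)`. -/
def coneForm (p : E × ℝ) (z : E) : ℝ := p.2 ^ 2 - ‖p.1 - z‖ ^ 2

/-- The open future light cone of `S × {0}`: the space-time points lying in the timelike future of
every point of `S`. -/
def lightCone (S : Set E) : Set (E × ℝ) := {p | 0 < p.2 ∧ ∀ z ∈ S, ‖p.1 - z‖ < p.2}

variable {S : Set E} {p : E × ℝ} {b : ℝ} {χ : E → ℝ}

lemma coneForm_pos (hp : p ∈ lightCone S) {z : E} (hz : z ∈ S) : 0 < coneForm p z :=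
  sub_pos.2 (pow_lt_pow_left₀ (hp.2 z hz) (norm_nonneg _) two_ne_zero)

lemma continuous_coneForm : Continuous (Function.uncurry (coneForm (E := E))) := by
  unfold coneForm
  fun_prop

lemma isOpen_lightCone (hS : IsCompact S) : IsOpen (lightCone S) := by
  have hball : lightCone S = {p | 0 < p.2} ∩ {p | S ⊆ {z | ‖p.1 - z‖ < p.2}} := rfl
  rw [hball]
  refine (isOpen_lt continuous_const continuous_snd).inter ?_
  exact isOpen_iff_eventually.2 fun p hp => hS.eventually_forall_of_forall_eventually fun z hz =>
    (isOpen_lt (f := fun q : (E × ℝ) × E => ‖q.1.1 - q.2‖) (g := fun q => q.1.2)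
      (by fun_prop) (by fun_prop)).mem_nhds (hp hz)

lemma continuous_besselKernel_coneForm (hb : 0 ≤ b) :
    Continuous fun q : (E × ℝ) × E => besselKernel b (coneForm q.1 q.2) :=
  (continuous_besselKernel hb).comp continuous_coneForm

lemma continuousOn_besselKernel_coneForm {T : Set (E × ℝ)} (hb : 0 ≤ b ∨ T ⊆ lightCone S) :
    ContinuousOn (fun q : (E × ℝ) × E => besselKernel b (coneForm q.1 q.2)) (T ×ˢ S) := by
  rcases hb with hb | hT
  · exact (continuous_besselKernel_coneForm hb).continuousOn
  · exact fun q hq => (ContinuousAt.comp (f := Function.uncurry coneForm)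
      (hasDerivAt_besselKernel_of_pos b (coneForm_pos (hT hq.1) hq.2)).continuousAt
      continuous_coneForm.continuousAt).continuousWithinAt

variable [InnerProductSpace ℝ E]

lemma hasLineDerivAt_coneForm (p e : E × ℝ) (z : E) :
    HasLineDerivAt ℝ (fun q => coneForm q z) (2 * (p.2 * e.2 - ⟪p.1 - z, e.1⟫_ℝ)) p e := by
  have h : HasFDerivAt (fun q => coneForm q z) _ p :=
    ((hasFDerivAt_snd (𝕜 := ℝ) (p := p)).pow 2).fun_sub
      ((hasFDerivAt_fst (𝕜 := ℝ) (p := p)).sub_const z).norm_sq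
  refine (h.hasLineDerivAt e).congr_deriv ?_
  simp [inner_sub_left]
  ring

lemma hasLineDerivAt_coneForm_deriv (p e : E × ℝ) (z : E) :
    HasLineDerivAt ℝ (fun q : E × ℝ => 2 * (q.2 * e.2 - ⟪q.1 - z, e.1⟫_ℝ))
      (2 * (e.2 ^ 2 - ‖e.1‖ ^ 2)) p e := by
  have h := (((hasFDerivAt_snd (𝕜 := ℝ) (p := p)).mul_const e.2).fun_sub
    (((hasFDerivAt_fst (𝕜 := ℝ) (p := p)).sub_const z).inner ℝ
      (hasFDerivAt_const e.1 p))).const_mul 2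
  refine (h.hasLineDerivAt e).congr_deriv ?_
  simp [sq]

lemma hasLineDerivAt_besselKernel_coneForm {z : E} (hb : 1 < b ∨ 0 < coneForm p z) (e : E × ℝ) :
    HasLineDerivAt ℝ (fun q => besselKernel b (coneForm q z))
      (besselKernel (b - 1) (coneForm p z) * (2 * (p.2 * e.2 - ⟪p.1 - z, e.1⟫_ℝ))) p e :=
  hasLineDerivAt_comp (hb.elim (fun hb => hasDerivAt_besselKernel hb _)
    (hasDerivAt_besselKernel_of_pos b)) (hasLineDerivAt_coneForm p e z)

variable [MeasurableSpace E] [BorelSpace E] [FiniteDimensional ℝ E]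

/-- The potential `(x, τ) ↦ ∫ Φ_b(τ² - |x - z|²) χ(z) dz`. -/
def potential (b : ℝ) (χ : E → ℝ) (p : E × ℝ) : ℝ := ∫ z, besselKernel b (coneForm p z) * χ z

lemma hasLineDerivAt_potential (hχ : Continuous χ) (hχc : HasCompactSupport χ) (e : E × ℝ)
    (hb : 1 < b ∨ p ∈ lightCone (tsupport χ)) :
    HasLineDerivAt ℝ (potential b χ)
      (∫ z, besselKernel (b - 1) (coneForm p z) * (2 * (p.2 * e.2 - ⟪p.1 - z, e.1⟫_ℝ)) * χ z)
      p e := by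
  obtain ⟨T, hT, hpT, hbT⟩ : ∃ T : Set (E × ℝ), IsOpen T ∧ p ∈ T ∧
      (1 < b ∨ T ⊆ lightCone (tsupport χ)) := by
    rcases hb with hb | hp
    · exact ⟨univ, isOpen_univ, mem_univ p, Or.inl hb⟩
    · exact ⟨_, isOpen_lightCone hχc, hp, Or.inr subset_rfl⟩
  exact hasLineDerivAt_integral_mul hχ hχc hT hpT (G := fun q z => besselKernel b (coneForm q z))
    (G' := fun q z => besselKernel (b - 1) (coneForm q z) * (2 * (q.2 * e.2 - ⟪q.1 - z, e.1⟫_ℝ)))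
    (continuousOn_besselKernel_coneForm (hbT.imp_left fun hb => by linarith))
    ((continuousOn_besselKernel_coneForm (hbT.imp_left fun hb => by linarith)).mul
      (by fun_prop : Continuous fun q : (E × ℝ) × E =>
        2 * (q.1.2 * e.2 - ⟪q.1.1 - q.2, e.1⟫_ℝ)).continuousOn)
    fun q hq z hz => hasLineDerivAt_besselKernel_coneForm
      (hbT.imp_right fun hT => coneForm_pos (hT hq) hz) e

lemma timeDeriv_potential (hχ : Continuous χ) (hχc : HasCompactSupport χ)
    (hb : 1 < b ∨ p ∈ lightCone (tsupport χ)) :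
    timeDeriv (potential b χ) p = 2 * p.2 * potential (b - 1) χ p := by
  rw [timeDeriv, dirDeriv, (hasLineDerivAt_potential hχ hχc (0, 1) hb).lineDeriv, potential,
    ← integral_const_mul]
  simp only [mul_one, inner_zero_right, sub_zero]
  congr 1 with z
  ring

lemma dirDeriv_dirDeriv_potential (hχ : Continuous χ) (hχc : HasCompactSupport χ) (hb : 2 < b)
    (p e : E × ℝ) : dirDeriv e (dirDeriv e (potential b χ)) p
      = ∫ z, (4 * (p.2 * e.2 - ⟪p.1 - z, e.1⟫_ℝ) ^ 2 * besselKernel (b - 2) (coneForm p z)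
          + 2 * (e.2 ^ 2 - ‖e.1‖ ^ 2) * besselKernel (b - 1) (coneForm p z)) * χ z := by
  have hfirst : dirDeriv e (potential b χ) = fun p => ∫ z, besselKernel (b - 1) (coneForm p z) *
      (2 * (p.2 * e.2 - ⟪p.1 - z, e.1⟫_ℝ)) * χ z :=
    funext fun q => (hasLineDerivAt_potential hχ hχc e (Or.inl (by linarith))).lineDeriv
  have hΦ₁ := continuous_besselKernel_coneForm (E := E) (b := b - 1) (by linarith)
  have hΦ₂ := continuous_besselKernel_coneForm (E := E) (b := b - 1 - 1) (by linarith)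
  have hsecond := hasLineDerivAt_integral_mul (μ := volume) hχ hχc isOpen_univ (mem_univ p)
    (G := fun q z => besselKernel (b - 1) (coneForm q z) * (2 * (q.2 * e.2 - ⟪q.1 - z, e.1⟫_ℝ)))
    (G' := fun q z => besselKernel (b - 1 - 1) (coneForm q z) *
      (2 * (q.2 * e.2 - ⟪q.1 - z, e.1⟫_ℝ)) * (2 * (q.2 * e.2 - ⟪q.1 - z, e.1⟫_ℝ))
        + besselKernel (b - 1) (coneForm q z) * (2 * (e.2 ^ 2 - ‖e.1‖ ^ 2)))
    (by unfold Function.uncurry; fun_prop) (by unfold Function.uncurry; fun_prop)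
    fun q _ z _ => hasLineDerivAt_mul
      (hasLineDerivAt_besselKernel_coneForm (Or.inl (by linarith)) e)
      (hasLineDerivAt_coneForm_deriv q e z)
  rw [hfirst, dirDeriv, hsecond.lineDeriv, sub_sub, one_add_one_eq_two]
  congr 1 with z
  ring

lemma integrable_mul_of_hasCompactSupport {F : E → ℝ} (hF : Continuous F) (hχ : Continuous χ)
    (hχc : HasCompactSupport χ) : Integrable fun z => F z * χ z :=
  (hF.mul hχ).integrable_of_hasCompactSupport hχc.mul_left

lemma spaceLap_potential (hχ : Continuous χ) (hχc : HasCompactSupport χ) (hb : 2 < b)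
    (p : E × ℝ) : spaceLap (potential b χ) p
      = ∫ z, (4 * ‖p.1 - z‖ ^ 2 * besselKernel (b - 2) (coneForm p z)
          - 2 * Module.finrank ℝ E * besselKernel (b - 1) (coneForm p z)) * χ z := by
  have hcont (c : ℝ) (hc : 0 ≤ c) : Continuous fun z => besselKernel c (coneForm p z) :=
    (continuous_besselKernel_coneForm hc).comp (.prodMk_right p)
  have hΦ₁ := hcont (b - 1) (by linarith)
  have hΦ₂ := hcont (b - 2) (by linarith)
  simp only [spaceLap, dirDeriv_dirDeriv_potential hχ hχc hb]
  rw [← integral_finsetSum _ fun i _ =>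
    integrable_mul_of_hasCompactSupport (by fun_prop) hχ hχc]
  congr 1 with z
  rw [← (stdOrthonormalBasis ℝ E).sum_sq_inner_left (p.1 - z)]
  simp only [OrthonormalBasis.norm_eq_one]
  simp only [mul_zero, zero_sub, neg_sq, one_pow, ne_eq, OfNat.ofNat_ne_zero, not_false_eq_true,
    zero_pow, ← Finset.sum_mul, Finset.sum_add_distrib, ← Finset.mul_sum, Finset.sum_const,
    Finset.card_univ, Fintype.card_fin, nsmul_eq_mul]
  ring

/-- The Euler–Poisson–Darboux type equation `F_ττ + (c / τ) F_τ = ΔF + F / 4`, for `τ > 0`. -/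
def IsEPD (c : ℝ) (F : E × ℝ → ℝ) : Prop :=
  ∀ p : E × ℝ, 0 < p.2 →
    p.2 * timeDeriv (timeDeriv F) p + c * timeDeriv F p = p.2 * lapQuarter F p

lemma isEPD_potential (hχ : Continuous χ) (hχc : HasCompactSupport χ) (hb : 2 < b) :
    IsEPD (1 - (Module.finrank ℝ E + 2 * b)) (potential b χ) := by
  intro p _
  have hcont (c : ℝ) (hc : 0 ≤ c) : Continuous fun z => besselKernel c (coneForm p z) :=
    (continuous_besselKernel_coneForm hc).comp (.prodMk_right p)
  have hΦ₀ := hcont b (by linarith)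
  have hΦ₁ := hcont (b - 1) (by linarith)
  have hΦ₂ := hcont (b - 2) (by linarith)
  have hrec (z : E) : coneForm p z * besselKernel (b - 2) (coneForm p z)
      = (b - 1) * besselKernel (b - 1) (coneForm p z) + besselKernel b (coneForm p z) / 16 := by
    simpa only [sub_sub, one_add_one_eq_two, sub_add_cancel] using
      mul_besselKernel_sub_one_of_one_lt (b := b - 1) (by linarith) (coneForm p z)
  have hwave : timeDeriv (timeDeriv (potential b χ)) p - spaceLap (potential b χ) p
      = (4 * (b - 1) + 2 + 2 * Module.finrank ℝ E) * potential (b - 1) χ p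
        + potential b χ p / 4 := by
    simp only [timeDeriv, dirDeriv_dirDeriv_potential hχ hχc hb, spaceLap_potential hχ hχc hb,
      potential]
    rw [← integral_sub, ← integral_const_mul, ← integral_div, ← integral_add]
    · congr 1 with z
      simp only [inner_zero_right, norm_zero]
      have h := hrec z
      rw [coneForm] at h ⊢
      linear_combination 4 * χ z * h
    · exact (integrable_mul_of_hasCompactSupport hΦ₁ hχ hχc).const_mul _
    · exact (integrable_mul_of_hasCompactSupport hΦ₀ hχ hχc).div_const 4
    · exact integrable_mul_of_hasCompactSupport (by fun_prop) hχ hχc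
    · exact integrable_mul_of_hasCompactSupport (by fun_prop) hχ hχc
  rw [timeDeriv_potential hχ hχc (Or.inl (by linarith)), lapQuarter]
  linear_combination p.2 * hwave

end Potential

section VanishesOffCone

variable {E : Type*} [NormedAddCommGroup E] {R : ℝ} {F : E × ℝ → ℝ}

/-- `F` vanishes outside the forward and backward light cones of the ball of radius `R` around the
origin in the plane `τ = 0`. -/
def VanishesOffCone (R : ℝ) (F : E × ℝ → ℝ) : Prop :=
  ∀ p : E × ℝ, R + |p.2| < ‖p.1‖ → F p = 0

lemma vanishesOffCone_dirDeriv [NormedSpace ℝ E] (hF : VanishesOffCone R F) (e : E × ℝ) :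
    VanishesOffCone R (dirDeriv e F) := by
  intro p hp
  have hopen : IsOpen {p : E × ℝ | R + |p.2| < ‖p.1‖} := isOpen_lt (by fun_prop) (by fun_prop)
  have hzero : F =ᶠ[𝓝 p] fun _ => 0 := eventually_of_mem (hopen.mem_nhds hp) hF
  rw [(dirDeriv_congr hzero e).eq_of_nhds, dirDeriv, lineDeriv, deriv_const]

end VanishesOffCone

section BallPotential

open scoped ContDiff

variable {E : Type*} [NormedAddCommGroup E] {b : ℝ} {χ : E → ℝ} {p : E × ℝ}

lemma max_one_sub_norm_sq_rpow_eq_zero (hb : b ≠ 0) {y : E} (hy : 1 ≤ ‖y‖) :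
    max (1 - ‖y‖ ^ 2) 0 ^ b = 0 := by
  rw [max_eq_right (sub_nonpos.2 (one_le_pow₀ hy)), zero_rpow hb]

variable [InnerProductSpace ℝ E] [MeasurableSpace E] [BorelSpace E] [FiniteDimensional ℝ E]

/-- The potential `potential b χ` rescaled to the unit ball and stripped of its power of `τ`. Unlike
the potential itself it is smooth on all of space-time. -/
def ballPotential (b : ℝ) (χ : E → ℝ) (p : E × ℝ) : ℝ :=
  ∫ y : E, max (1 - ‖y‖ ^ 2) 0 ^ b *
    (besselEntire b (p.2 ^ 2 * (1 - ‖y‖ ^ 2)) * χ (p.1 + p.2 • y))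

lemma contDiff_ballPotential (hb : 0 < b) (hχ : ContDiff ℝ ∞ χ) :
    ContDiff ℝ ∞ (ballPotential b χ) := by
  refine contDiff_integral_unitBall
    (F := fun q : (E × ℝ) × E => besselEntire b (q.1.2 ^ 2 * (1 - ‖q.2‖ ^ 2)) *
      χ (q.1.1 + q.1.2 • q.2))
    (((continuous_const.sub (continuous_norm.pow 2)).max continuous_const).rpow_const
      fun _ => Or.inr hb.le) (fun y => max_one_sub_norm_sq_rpow_eq_zero hb.ne') ?_
  refine ((contDiff_besselEntire b).comp ?_).mul (hχ.comp (by fun_prop))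
  exact (contDiff_fst.snd.pow 2).mul (contDiff_const.sub (contDiff_snd.norm_sq ℝ))

lemma potential_eq_rpow_mul_ballPotential (b : ℝ) (χ : E → ℝ) (hp : 0 < p.2) :
    potential b χ p = p.2 ^ (Module.finrank ℝ E + 2 * b) * ballPotential b χ p := by
  obtain ⟨x, τ⟩ := p
  change 0 < τ at hp
  have hτd : 0 < τ ^ Module.finrank ℝ E := pow_pos hp _
  have hscale := Measure.integral_comp_smul (volume : Measure E)
    (fun y => besselKernel b (coneForm (x, τ) (x + y)) * χ (x + y)) τ
  rw [abs_of_pos (inv_pos.2 hτd), smul_eq_mul, eq_inv_mul_iff_mul_eq₀ hτd.ne',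
    integral_add_left_eq_self (fun y => besselKernel b (coneForm (x, τ) y) * χ y)] at hscale
  rw [potential, ← hscale, rpow_add hp, rpow_natCast, mul_assoc, ballPotential]
  refine congrArg (_ * ·) ?_
  rw [← integral_const_mul]
  congr 1 with y
  have hform : coneForm (x, τ) (x + τ • y) = τ ^ 2 * (1 - ‖y‖ ^ 2) := by
    rw [coneForm, sub_add_cancel_left, norm_neg, norm_smul, norm_of_nonneg hp.le]
    ring
  have hmax : max (τ ^ 2 * (1 - ‖y‖ ^ 2)) 0 = τ ^ 2 * max (1 - ‖y‖ ^ 2) 0 := by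
    rw [mul_max_of_nonneg _ _ (sq_nonneg τ), mul_zero]
  rw [hform, besselKernel, hmax, mul_rpow (sq_nonneg τ) (le_max_right _ _), ← rpow_natCast τ 2,
    ← rpow_mul hp.le, Nat.cast_ofNat, mul_assoc, mul_assoc]

lemma ballPotential_snd_eq_zero (b : ℝ) (χ : E → ℝ) (x : E) :
    ballPotential b χ (x, 0)
      = (∫ y : E, max (1 - ‖y‖ ^ 2) 0 ^ b * besselEntire b 0) * χ x := by
  simp [ballPotential, ← integral_mul_const, mul_assoc]

lemma vanishesOffCone_ballPotential (hb : 0 < b) {R : ℝ} (hχ : ∀ z, R < ‖z‖ → χ z = 0) :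
    VanishesOffCone R (ballPotential b χ) := by
  refine fun p hp => integral_eq_zero_of_ae (Eventually.of_forall fun y => ?_)
  rcases le_or_gt 1 ‖y‖ with hy | hy
  · simp only [max_one_sub_norm_sq_rpow_eq_zero hb.ne' hy, zero_mul, Pi.zero_apply]
  · have hsmul : ‖p.2 • y‖ ≤ |p.2| := by
      rw [norm_smul, norm_eq_abs]
      exact mul_le_of_le_one_right (abs_nonneg _) hy.le
    have hadd := norm_le_add_norm_add p.1 (p.2 • y)
    simp only [hχ (p.1 + p.2 • y) (by linarith), mul_zero, Pi.zero_apply]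

end BallPotential

section Descent

open scoped ContDiff

variable {E : Type*} [NormedAddCommGroup E] {F Q : E × ℝ → ℝ} {k : ℝ} {p : E × ℝ}

lemma eventuallyEq_of_forall_snd_pos (h : ∀ q : E × ℝ, 0 < q.2 → F q = Q q) (hp : 0 < p.2) :
    F =ᶠ[𝓝 p] Q :=
  eventually_of_mem ((isOpen_lt continuous_const continuous_snd).mem_nhds hp) h

variable [InnerProductSpace ℝ E]

lemma timeDeriv_eq_of_eventuallyEq_rpow_mul (hQ : ContDiff ℝ ∞ Q) (hp : 0 < p.2)
    (hFQ : F =ᶠ[𝓝 p] fun q => q.2 ^ k * Q q) :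
    timeDeriv F p = k * p.2 ^ (k - 1) * Q p + p.2 ^ k * timeDeriv Q p := by
  rw [timeDeriv, (dirDeriv_congr hFQ _).eq_of_nhds, ← timeDeriv]
  exact timeDeriv_snd_mul (hasDerivAt_rpow_const (Or.inl hp.ne'))
    (hQ.differentiable (by simp) p)

/-- The operator `k + τ ∂_τ`, which lowers the index of the Euler–Poisson–Darboux type equation
from `1 + k` to `k - 1`. -/
def epdStep (k : ℝ) (F : E × ℝ → ℝ) (p : E × ℝ) : ℝ := k * F p + p.2 * timeDeriv F p

lemma contDiff_epdStep (hF : ContDiff ℝ ∞ F) (k : ℝ) : ContDiff ℝ ∞ (epdStep k F) :=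
  (contDiff_const.mul hF).add (contDiff_snd.mul (contDiff_timeDeriv hF))

variable [FiniteDimensional ℝ E]

/-- Weinstein's correspondence between the equations of index `1 - k` and `1 + k`. -/
lemma IsEPD.of_eq_rpow_mul (hF : IsEPD (1 - k) F) (hQ : ContDiff ℝ ∞ Q)
    (hFQ : ∀ p : E × ℝ, 0 < p.2 → F p = p.2 ^ k * Q p) : IsEPD (1 + k) Q := by
  rintro ⟨x, τ⟩ (hτ : 0 < τ)
  have hev (q : E × ℝ) (hq : 0 < q.2) := eventuallyEq_of_forall_snd_pos hFQ hq
  have hfirst (q : E × ℝ) (hq : 0 < q.2) :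
      timeDeriv F q = k * q.2 ^ (k - 1) * Q q + q.2 ^ k * timeDeriv Q q :=
    timeDeriv_eq_of_eventuallyEq_rpow_mul hQ hq (hev q hq)
  have hsecond : timeDeriv (timeDeriv F) (x, τ)
      = k * ((k - 1) * τ ^ (k - 1 - 1)) * Q (x, τ) + k * τ ^ (k - 1) * timeDeriv Q (x, τ)
        + (k * τ ^ (k - 1) * timeDeriv Q (x, τ) + τ ^ k * timeDeriv (timeDeriv Q) (x, τ)) := by
    have hpow (k : ℝ) := hasDerivAt_rpow_const (p := k) (Or.inl hτ.ne')
    rw [timeDeriv, (dirDeriv_congr (eventuallyEq_of_forall_snd_pos hfirst hτ) _).eq_of_nhds,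
      ← timeDeriv, timeDeriv_eq_deriv]
    exact ((((hpow (k - 1)).const_mul k).mul (hasDerivAt_timeDeriv hQ x τ)).add
      ((hpow k).mul (hasDerivAt_timeDeriv (contDiff_timeDeriv hQ) x τ))).deriv
  have hEPD := hF (x, τ) hτ
  rw [hsecond, hfirst _ hτ, lapQuarter_congr (hev _ hτ),
    lapQuarter_snd_mul (· ^ k), rpow_sub_one hτ.ne', rpow_sub_one hτ.ne'] at hEPD
  refine mul_left_cancel₀ hτ.ne' ?_
  field_simp at hEPD
  linear_combination hEPD

lemma IsEPD.timeDeriv_epdStep (h : IsEPD (1 + k) F) (hF : ContDiff ℝ ∞ F) (hp : 0 < p.2) :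
    timeDeriv (epdStep k F) p = p.2 * lapQuarter F p := by
  rw [timeDeriv_eq_deriv, ← h p hp]
  refine ((((hasDerivAt_timeDeriv hF p.1 p.2).const_mul k).add ((hasDerivAt_id p.2).mul
    (hasDerivAt_timeDeriv (contDiff_timeDeriv hF) p.1 p.2))).congr_deriv ?_).deriv
  simp only [id]
  ring

lemma isEPD_epdStep (h : IsEPD (1 + k) F) (hF : ContDiff ℝ ∞ F) :
    IsEPD (k - 1) (epdStep k F) := by
  intro p hp
  have hlap : lapQuarter (epdStep k F) p
      = k * lapQuarter F p + p.2 * lapQuarter (timeDeriv F) p := by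
    have hτ := contDiff_snd.mul (contDiff_timeDeriv hF)
    exact (lapQuarter_add (contDiff_const.mul hF) hτ p).trans
      (congrArg₂ _ (lapQuarter_snd_mul (fun _ => k) F p) (lapQuarter_snd_mul id _ p))
  have hsecond : timeDeriv (timeDeriv (epdStep k F)) p
      = lapQuarter F p + p.2 * lapQuarter (timeDeriv F) p := by
    rw [timeDeriv, (dirDeriv_congr (eventuallyEq_of_forall_snd_pos
      (fun q hq => h.timeDeriv_epdStep hF hq) hp) _).eq_of_nhds, ← timeDeriv,
      timeDeriv_snd_mul (a := fun τ => τ) (hasDerivAt_id' p.2)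
        ((contDiff_lapQuarter hF).differentiable (by simp) p),
      timeDeriv_lapQuarter hF, one_mul]
  rw [hsecond, h.timeDeriv_epdStep hF hp, hlap]
  ring

end Descent

section VelocityWave

open scoped ContDiff

variable {E : Type*} [NormedAddCommGroup E] [InnerProductSpace ℝ E]

/-- The order `(1 - d) / 2` of the potentials that solve `w_ττ = Δw + w / 4` in dimension `d`. -/
def waveOrder (E : Type*) [NormedAddCommGroup E] [InnerProductSpace ℝ E] : ℝ :=
  (1 - Module.finrank ℝ E) / 2

lemma two_lt_waveOrder_add (E : Type*) [NormedAddCommGroup E] [InnerProductSpace ℝ E] :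
    2 < waveOrder E + (Module.finrank ℝ E + 2 : ℕ) := by
  rw [waveOrder]
  push_cast
  linarith [(Module.finrank ℝ E).cast_nonneg (α := ℝ)]

variable [MeasurableSpace E] [BorelSpace E] [FiniteDimensional ℝ E] {b : ℝ} {χ : E → ℝ} {p : E × ℝ}

/-- The smooth functions obtained from `ballPotential b χ` by lowering its Euler–Poisson–Darboux
index step by step; up to a power of `2 τ`, the `j`-th one is the potential of order `b - j`. -/
def reducedPotential (b : ℝ) (χ : E → ℝ) : ℕ → E × ℝ → ℝ
  | 0 => ballPotential b χ
  | j + 1 => epdStep (Module.finrank ℝ E + 2 * (b - j)) (reducedPotential b χ j)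

lemma contDiff_reducedPotential (hb : 0 < b) (hχ : ContDiff ℝ ∞ χ) (j : ℕ) :
    ContDiff ℝ ∞ (reducedPotential b χ j) := by
  induction j with
  | zero => exact contDiff_ballPotential hb hχ
  | succ j ih => exact contDiff_epdStep ih _

lemma isEPD_reducedPotential (hb : 2 < b) (hχ : ContDiff ℝ ∞ χ) (hχc : HasCompactSupport χ)
    (j : ℕ) :
    IsEPD (1 + (Module.finrank ℝ E + 2 * (b - j))) (reducedPotential b χ j) := by
  have hb0 : 0 < b := by linarith
  induction j with
  | zero =>
    rw [Nat.cast_zero, sub_zero]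
    exact (isEPD_potential hχ.continuous hχc hb).of_eq_rpow_mul (contDiff_ballPotential hb0 hχ)
      fun p => potential_eq_rpow_mul_ballPotential b χ
  | succ j ih =>
    have hindex : 1 + (Module.finrank ℝ E + 2 * (b - (j + 1 : ℕ)))
        = Module.finrank ℝ E + 2 * (b - j) - 1 := by
      push_cast
      ring
    rw [hindex]
    exact isEPD_epdStep ih (contDiff_reducedPotential hb0 hχ j)

lemma vanishesOffCone_reducedPotential (hb : 0 < b) {R : ℝ} (hχ : ∀ z, R < ‖z‖ → χ z = 0)
    (j : ℕ) : VanishesOffCone R (reducedPotential b χ j) := by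
  induction j with
  | zero => exact vanishesOffCone_ballPotential hb hχ
  | succ j ih =>
    intro p hp
    rw [reducedPotential, epdStep, ih p hp, timeDeriv, vanishesOffCone_dirDeriv ih _ p hp,
      mul_zero, mul_zero, add_zero]

lemma exists_reducedPotential_snd_eq_zero (b : ℝ) (j : ℕ) :
    ∃ c : ℝ, ∀ (χ : E → ℝ) (x : E), reducedPotential b χ j (x, 0) = c * χ x := by
  induction j with
  | zero => exact ⟨_, ballPotential_snd_eq_zero b⟩
  | succ j ih =>
    obtain ⟨c, hc⟩ := ih
    refine ⟨(Module.finrank ℝ E + 2 * (b - j)) * c, fun χ x => ?_⟩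
    rw [reducedPotential, epdStep, hc, zero_mul, add_zero, mul_assoc]

lemma pow_mul_potential_eq (hb : 0 < b) (hχ : ContDiff ℝ ∞ χ) (hχc : HasCompactSupport χ) (j : ℕ)
    (hp : p ∈ lightCone (tsupport χ)) :
    2 ^ j * potential (b - j) χ p
      = p.2 ^ (Module.finrank ℝ E + 2 * (b - j)) * reducedPotential b χ j p := by
  induction j generalizing p with
  | zero =>
    rw [pow_zero, one_mul, Nat.cast_zero, sub_zero, reducedPotential]
    exact potential_eq_rpow_mul_ballPotential b χ hp.1
  | succ j ih =>
    have hev : (fun q : E × ℝ => 2 ^ j * potential (b - j) χ q) =ᶠ[𝓝 p]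
        fun q => q.2 ^ (Module.finrank ℝ E + 2 * (b - j)) * reducedPotential b χ j q :=
      eventually_of_mem ((isOpen_lightCone hχc).mem_nhds hp) fun q hq => ih hq
    have hderiv := timeDeriv_eq_of_eventuallyEq_rpow_mul (contDiff_reducedPotential hb hχ j)
      hp.1 hev
    have hpot : timeDeriv (fun q => 2 ^ j * potential (b - j) χ q) p
        = 2 ^ j * (2 * p.2 * potential (b - j - 1) χ p) := by
      rw [← timeDeriv_potential hχ.continuous hχc (Or.inr hp)]
      exact deriv_const_mul_field _
    have hexp : (Module.finrank ℝ E : ℝ) + 2 * (b - (j + 1 : ℕ))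
        = Module.finrank ℝ E + 2 * (b - j) - 1 - 1 := by
      push_cast
      ring
    have hp0 := hp.1.ne'
    rw [hpot, rpow_sub_one hp0] at hderiv
    rw [hexp, rpow_sub_one hp0, rpow_sub_one hp0, reducedPotential, epdStep, Nat.cast_succ,
      ← sub_sub]
    field_simp at hderiv ⊢
    linear_combination hderiv

/-- A smooth solution of `w_ττ = Δw + w / 4` for `τ > 0`, vanishing at `τ = 0` and with initial
velocity proportional to `χ`. It is the potential of order `waveOrder E`, up to a constant, but that
potential only converges in the light cone of the support of `χ`; hence the descent from a
potential of large order. -/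
def velocityWave (χ : E → ℝ) (p : E × ℝ) : ℝ :=
  p.2 * reducedPotential (waveOrder E + (Module.finrank ℝ E + 2 : ℕ)) χ (Module.finrank ℝ E + 2) p

lemma contDiff_velocityWave (hχ : ContDiff ℝ ∞ χ) : ContDiff ℝ ∞ (velocityWave χ) :=
  contDiff_snd.mul (contDiff_reducedPotential (zero_lt_two.trans (two_lt_waveOrder_add E)) hχ _)

lemma timeDeriv_timeDeriv_velocityWave (hχ : ContDiff ℝ ∞ χ) (hχc : HasCompactSupport χ)
    (hp : 0 < p.2) : timeDeriv (timeDeriv (velocityWave χ)) p = lapQuarter (velocityWave χ) p := by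
  have hb := two_lt_waveOrder_add E
  set b := waveOrder E + (Module.finrank ℝ E + 2 : ℕ) with hbdef
  set F := reducedPotential b χ (Module.finrank ℝ E + 2)
  have hF : ContDiff ℝ ∞ F := contDiff_reducedPotential (by linarith) hχ _
  have hEPD := isEPD_reducedPotential hb hχ hχc (Module.finrank ℝ E + 2) p hp
  have hfirst : timeDeriv (velocityWave χ) = fun q => F q + q.2 * timeDeriv F q := by
    funext q
    exact (timeDeriv_snd_mul (a := fun τ => τ) (hasDerivAt_id' q.2)
      (hF.differentiable (by simp) q)).trans (by rw [one_mul])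
  have hsecond : timeDeriv (timeDeriv (velocityWave χ)) p
      = 2 * timeDeriv F p + p.2 * timeDeriv (timeDeriv F) p := by
    have hF' := contDiff_timeDeriv hF
    rw [hfirst, timeDeriv, dirDeriv_add (hF.differentiable (by simp) p)
      ((contDiff_snd.mul hF').differentiable (by simp) p), ← timeDeriv, ← timeDeriv,
      timeDeriv_snd_mul (a := fun τ => τ) (hasDerivAt_id' p.2)
        (hF'.differentiable (by simp) p)]
    ring
  have hlap : lapQuarter (velocityWave χ) p = p.2 * lapQuarter F p :=
    lapQuarter_snd_mul (fun τ => τ) F p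
  have hindex : 1 + (Module.finrank ℝ E + 2 * (b - (Module.finrank ℝ E + 2 : ℕ))) = 2 := by
    rw [hbdef, add_sub_cancel_right, waveOrder]
    ring
  rw [hindex] at hEPD
  rw [hsecond, hlap, ← hEPD]
  ring

lemma velocityWave_snd_eq_zero (χ : E → ℝ) (x : E) : velocityWave χ (x, 0) = 0 :=
  zero_mul _

lemma exists_timeDeriv_velocityWave_snd_eq_zero (E : Type*) [NormedAddCommGroup E]
    [InnerProductSpace ℝ E] [MeasurableSpace E] [BorelSpace E] [FiniteDimensional ℝ E] :
    ∃ c : ℝ, ∀ χ : E → ℝ, ContDiff ℝ ∞ χ → ∀ x, timeDeriv (velocityWave χ) (x, 0) = c * χ x := by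
  obtain ⟨c, hc⟩ := exists_reducedPotential_snd_eq_zero (E := E)
    (waveOrder E + (Module.finrank ℝ E + 2 : ℕ)) (Module.finrank ℝ E + 2)
  refine ⟨c, fun χ hχ x => ?_⟩
  have h := timeDeriv_snd_mul (a := fun τ => τ) (p := (x, 0)) (hasDerivAt_id' (0 : ℝ))
    ((contDiff_reducedPotential (zero_lt_two.trans (two_lt_waveOrder_add E)) hχ
      (Module.finrank ℝ E + 2)).differentiable (by simp) _)
  rw [hc χ x, zero_mul, add_zero, one_mul] at h
  exact h

lemma vanishesOffCone_velocityWave {R : ℝ} (hχ : ∀ z, R < ‖z‖ → χ z = 0) :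
    VanishesOffCone R (velocityWave χ) := fun p hp => by
  rw [velocityWave, vanishesOffCone_reducedPotential
    (zero_lt_two.trans (two_lt_waveOrder_add E)) hχ _ p hp, mul_zero]

lemma velocityWave_eq_potential (hχ : ContDiff ℝ ∞ χ) (hχc : HasCompactSupport χ)
    (hp : p ∈ lightCone (tsupport χ)) :
    velocityWave χ p = 2 ^ (Module.finrank ℝ E + 2) * potential (waveOrder E) χ p := by
  have h := pow_mul_potential_eq (zero_lt_two.trans (two_lt_waveOrder_add E)) hχ hχc
    (Module.finrank ℝ E + 2) hp
  have hexp : (Module.finrank ℝ E : ℝ) + 2 * waveOrder E = 1 := by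
    rw [waveOrder]
    ring
  rw [add_sub_cancel_right, hexp, rpow_one] at h
  rw [velocityWave, h]

lemma timeDeriv_velocityWave_eq_potential (hχ : ContDiff ℝ ∞ χ) (hχc : HasCompactSupport χ)
    (hp : p ∈ lightCone (tsupport χ)) : timeDeriv (velocityWave χ) p
      = 2 ^ (Module.finrank ℝ E + 2) * (2 * p.2 * potential (waveOrder E - 1) χ p) := by
  have hev : velocityWave χ =ᶠ[𝓝 p]
      fun q => 2 ^ (Module.finrank ℝ E + 2) * potential (waveOrder E) χ q :=
    eventually_of_mem ((isOpen_lightCone hχc).mem_nhds hp) fun q hq =>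
      velocityWave_eq_potential hχ hχc hq
  rw [timeDeriv, (dirDeriv_congr hev _).eq_of_nhds,
    ← timeDeriv_potential hχ.continuous hχc (Or.inr hp)]
  exact deriv_const_mul_field _

end VelocityWave

/-! ### Green's identity -/

section IntegrationByParts

variable {E : Type*} [NormedAddCommGroup E] [NormedSpace ℝ E] {a w : E → ℝ}

lemma contDiff_dirDeriv_one (ha : ContDiff ℝ 2 a) (e : E) : ContDiff ℝ 1 (dirDeriv e a) :=
  contDiff_iff_contDiffAt.2 fun _ => contDiffAt_dirDeriv (k := 1) ha.contDiffAt e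

lemma continuous_dirDeriv (ha : ContDiff ℝ 1 a) (e : E) : Continuous (dirDeriv e a) :=
  continuous_iff_continuousAt.2 fun _ =>
    (contDiffAt_dirDeriv (k := 0) (by simpa using ha.contDiffAt) e).continuousAt

lemma dirDeriv_eq_zero_of_notMem_tsupport {x : E} (hx : x ∉ tsupport w) (e : E) :
    dirDeriv e w x = 0 := by
  rw [(dirDeriv_congr (notMem_tsupport_iff_eventuallyEq.1 hx) e).eq_of_nhds, dirDeriv, lineDeriv]
  exact deriv_const _ _

lemma hasCompactSupport_dirDeriv (hwc : HasCompactSupport w) (e : E) :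
    HasCompactSupport (dirDeriv e w) :=
  HasCompactSupport.intro hwc fun _ hx => dirDeriv_eq_zero_of_notMem_tsupport hx e

variable [FiniteDimensional ℝ E] [MeasurableSpace E] [BorelSpace E] {μ : Measure E}
  [μ.IsAddHaarMeasure]

lemma integral_dirDeriv_mul (ha : ContDiff ℝ 1 a) (hw : ContDiff ℝ 1 w)
    (hwc : HasCompactSupport w) (e : E) :
    ∫ x, dirDeriv e a x * w x ∂μ = -∫ x, a x * dirDeriv e w x ∂μ := by
  have hda : dirDeriv e a = fun x => fderiv ℝ a x e :=
    funext fun x => (ha.differentiable one_ne_zero x).lineDeriv_eq_fderiv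
  have hdw : dirDeriv e w = fun x => fderiv ℝ w x e :=
    funext fun x => (hw.differentiable one_ne_zero x).lineDeriv_eq_fderiv
  have hint {p q : E → ℝ} (hp : Continuous p) (hq : Continuous q) (hqc : HasCompactSupport q) :
      Integrable (fun x => p x * q x) μ :=
    (hp.mul hq).integrable_of_hasCompactSupport hqc.mul_left
  have hwc' := hasCompactSupport_dirDeriv hwc e
  have ha' := continuous_dirDeriv ha e
  have hw' := continuous_dirDeriv hw e
  rw [hdw] at hwc' hw' ⊢
  rw [hda] at ha' ⊢
  rw [integral_mul_fderiv_eq_neg_fderiv_mul_of_integrable (hint ha' hw.continuous hwc)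
    (hint ha.continuous hw' hwc') (hint ha.continuous hw.continuous hwc)
    (fun x _ => ha.differentiable one_ne_zero x) fun x _ => hw.differentiable one_ne_zero x,
    neg_neg]

lemma integral_dirDeriv_dirDeriv_mul (ha : ContDiff ℝ 2 a) (hw : ContDiff ℝ 2 w)
    (hwc : HasCompactSupport w) (e : E) :
    ∫ x, dirDeriv e (dirDeriv e a) x * w x ∂μ = ∫ x, a x * dirDeriv e (dirDeriv e w) x ∂μ := by
  rw [integral_dirDeriv_mul (contDiff_dirDeriv_one ha e) (hw.of_le one_le_two) hwc,
    integral_dirDeriv_mul (ha.of_le one_le_two) (contDiff_dirDeriv_one hw e)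
      (hasCompactSupport_dirDeriv hwc e), neg_neg]

end IntegrationByParts

section Green

variable {E : Type*} [NormedAddCommGroup E]

lemma univ_prod_Ici_mem_nhds {p : E × ℝ} (hp : 0 < p.2) :
    (univ : Set E) ×ˢ Ici (0 : ℝ) ∈ 𝓝 p :=
  prod_mem_nhds univ_mem (Ici_mem_nhds hp)

variable {F v w : E × ℝ → ℝ} {R T t : ℝ} {x : E}

lemma VanishesOffCone.eq_zero_of_notMem_closedBall (hF : VanishesOffCone R F) (ht : t ∈ Icc 0 T)
    (hx : x ∉ closedBall 0 (R + T)) : F (x, T - t) = 0 := by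
  rw [mem_closedBall_zero_iff, not_le] at hx
  refine hF (x, T - t) ?_
  rw [abs_of_nonneg (sub_nonneg.2 ht.2)]
  linarith [ht.1]

variable [InnerProductSpace ℝ E]

/-- The time derivative of a function on `E × [0, ∞)`, one-sided at time zero. -/
def velocity (F : E × ℝ → ℝ) (p : E × ℝ) : ℝ := fderivWithin ℝ F (univ ×ˢ Ici 0) p (0, 1)

lemma uniqueDiffOn_univ_prod_Ici : UniqueDiffOn ℝ ((univ : Set E) ×ˢ Ici (0 : ℝ)) :=
  uniqueDiffOn_univ.prod (uniqueDiffOn_Ici 0)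

lemma velocity_eq_timeDeriv {p : E × ℝ} (hF : DifferentiableAt ℝ F p) (hp : 0 ≤ p.2) :
    velocity F p = timeDeriv F p := by
  rw [velocity, fderivWithin_eq_fderiv (uniqueDiffOn_univ_prod_Ici p ⟨mem_univ _, hp⟩) hF,
    timeDeriv, dirDeriv, hF.lineDeriv_eq_fderiv]

lemma velocity_eq_derivWithin (hF : DifferentiableOn ℝ F (univ ×ˢ Ici 0)) (x : E) :
    velocity F (x, 0) = derivWithin (fun s => F (x, s)) (Ici 0) 0 := by
  have hline : HasDerivWithinAt (fun s : ℝ => (x, s)) ((0 : E), (1 : ℝ)) (Ici 0) 0 :=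
    ((hasDerivAt_const (0 : ℝ) x).prodMk (hasDerivAt_id (0 : ℝ))).hasDerivWithinAt
  have h := (hF (x, 0) ⟨mem_univ _, self_mem_Ici⟩).hasFDerivWithinAt.comp_hasDerivWithinAt
    (0 : ℝ) hline fun s hs => ⟨mem_univ _, hs⟩
  exact (h.derivWithin (uniqueDiffOn_Ici (0 : ℝ) 0 self_mem_Ici)).symm

lemma continuousOn_velocity (hF : ContDiffOn ℝ 1 F (univ ×ˢ Ici 0)) :
    ContinuousOn (velocity F) (univ ×ˢ Ici 0) :=
  (hF.continuousOn_fderivWithin uniqueDiffOn_univ_prod_Ici le_rfl).clm_apply continuousOn_const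

lemma vanishesOffCone_velocity {R : ℝ} (hF : VanishesOffCone R F) :
    VanishesOffCone R (velocity F) := by
  intro p hp
  have hopen : IsOpen {p : E × ℝ | R + |p.2| < ‖p.1‖} := isOpen_lt (by fun_prop) (by fun_prop)
  have hzero : F =ᶠ[𝓝 p] fun _ => 0 := eventually_of_mem (hopen.mem_nhds hp) hF
  rw [velocity, hzero.fderivWithin_eq_of_nhds, fderivWithin_const_apply, zero_apply]

lemma contDiff_slice (hF : ∀ x, ContDiffAt ℝ 2 F (x, t)) : ContDiff ℝ 2 fun x => F (x, t) :=
  contDiff_iff_contDiffAt.2 fun x => (hF x).comp x (contDiffAt_id.prodMk contDiffAt_const)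

/-- The integrand of the bilinear form that is conserved when a solution `w` runs forward and a
solution `v` runs backward from time `T`. -/
def greenDensity (w v : E × ℝ → ℝ) (T t : ℝ) (x : E) : ℝ :=
  velocity w (x, t) * v (x, T - t) + w (x, t) * velocity v (x, T - t)

lemma greenDensity_eq_zero (hv : VanishesOffCone R v) (ht : t ∈ Icc 0 T)
    (hx : x ∉ closedBall 0 (R + T)) : greenDensity w v T t x = 0 := by
  rw [greenDensity, hv.eq_zero_of_notMem_closedBall ht hx,
    (vanishesOffCone_velocity hv).eq_zero_of_notMem_closedBall ht hx, mul_zero, mul_zero, add_zero]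

variable [FiniteDimensional ℝ E]

lemma spaceLap_eq_sum_slice (F : E × ℝ → ℝ) (x : E) (t : ℝ) :
    spaceLap F (x, t) = ∑ i, dirDeriv (stdOrthonormalBasis ℝ E i)
      (dirDeriv (stdOrthonormalBasis ℝ E i) fun z => F (z, t)) x := by
  simp only [← dirDeriv_space_eq_dirDeriv_slice, spaceLap]

lemma continuousAt_spaceLap {p : E × ℝ} (hF : ContDiffAt ℝ 2 F p) :
    ContinuousAt (spaceLap F) p :=
  tendsto_finsetSum _ fun _ _ => (contDiffAt_dirDeriv (k := 0)
    (contDiffAt_dirDeriv (k := 1) hF _) _).continuousAt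

lemma vanishesOffCone_spaceLap (hF : VanishesOffCone R F) : VanishesOffCone R (spaceLap F) :=
  fun _ hp => Finset.sum_eq_zero fun _ _ =>
    vanishesOffCone_dirDeriv (vanishesOffCone_dirDeriv hF _) _ _ hp

/-- `F` is a classical solution of `F_tt = ΔF + F / 4` on `E × [0, ∞)`. -/
structure IsQuarterWave (F : E × ℝ → ℝ) : Prop where
  contDiffOn : ContDiffOn ℝ 2 F (univ ×ˢ Ici 0)
  timeDeriv_timeDeriv : ∀ p : E × ℝ, 0 < p.2 → timeDeriv (timeDeriv F) p = lapQuarter F p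

lemma IsQuarterWave.contDiffAt (hF : IsQuarterWave F) (x : E) (ht : 0 < t) :
    ContDiffAt ℝ 2 F (x, t) :=
  hF.contDiffOn.contDiffAt (univ_prod_Ici_mem_nhds ht)

lemma IsQuarterWave.continuousOn_velocity (hF : IsQuarterWave F) :
    ContinuousOn (velocity F) (univ ×ˢ Ici 0) :=
  _root_.continuousOn_velocity (hF.contDiffOn.of_le one_le_two)

lemma IsQuarterWave.hasDerivAt (hF : IsQuarterWave F) (x : E) (ht : 0 < t) :
    HasDerivAt (fun s => F (x, s)) (velocity F (x, t)) t := by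
  have hd := (hF.contDiffAt x ht).differentiableAt two_ne_zero
  rw [velocity_eq_timeDeriv hd ht.le]
  exact hasDerivAt_timeDeriv_of_differentiableAt hd

lemma IsQuarterWave.hasDerivAt_velocity (hF : IsQuarterWave F) (x : E) (ht : 0 < t) :
    HasDerivAt (fun s => velocity F (x, s)) (lapQuarter F (x, t)) t := by
  have hd : DifferentiableAt ℝ (timeDeriv F) (x, t) :=
    (contDiffAt_dirDeriv (k := 1) (hF.contDiffAt x ht) _).differentiableAt (by simp)
  rw [← hF.timeDeriv_timeDeriv _ ht]
  refine (hasDerivAt_timeDeriv_of_differentiableAt hd).congr_of_eventuallyEq ?_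
  filter_upwards [lt_mem_nhds ht] with s hs
  exact velocity_eq_timeDeriv ((hF.contDiffAt x hs).differentiableAt two_ne_zero) hs.le

lemma continuousOn_greenDensity (hw : IsQuarterWave w) (hv : IsQuarterWave v) :
    ContinuousOn (Function.uncurry (greenDensity w v T)) (Icc 0 T ×ˢ univ) := by
  have hcomp {F : E × ℝ → ℝ} (hF : ContinuousOn F (univ ×ˢ Ici 0)) :
      ContinuousOn (fun q : ℝ × E => F (q.2, q.1)) (Icc 0 T ×ˢ univ) ∧
        ContinuousOn (fun q : ℝ × E => F (q.2, T - q.1)) (Icc 0 T ×ˢ univ) :=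
    ⟨hF.comp (by fun_prop) fun q hq => ⟨mem_univ _, hq.1.1⟩,
      hF.comp (by fun_prop) fun q hq => ⟨mem_univ _, sub_nonneg.2 hq.1.2⟩⟩
  exact ((hcomp hw.continuousOn_velocity).1.mul (hcomp hv.contDiffOn.continuousOn).2).add
    ((hcomp hw.contDiffOn.continuousOn).1.mul (hcomp hv.continuousOn_velocity).2)

lemma hasDerivAt_greenDensity (hw : IsQuarterWave w) (hv : IsQuarterWave v) (x : E)
    (ht : t ∈ Ioo 0 T) : HasDerivAt (fun t => greenDensity w v T t x)
      (spaceLap w (x, t) * v (x, T - t) - w (x, t) * spaceLap v (x, T - t)) t := by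
  have hT : 0 < T - t := sub_pos.2 ht.2
  refine (((hw.hasDerivAt_velocity x ht.1).mul ((hv.hasDerivAt x hT).comp_const_sub T t)).add
    ((hw.hasDerivAt x ht.1).mul
      ((hv.hasDerivAt_velocity x hT).comp_const_sub T t))).congr_deriv ?_
  simp only [lapQuarter]
  ring

variable [MeasurableSpace E] [BorelSpace E]

lemma integral_spaceLap_mul_sub_eq_zero {s : ℝ} (hw : ∀ x, ContDiffAt ℝ 2 w (x, t))
    (hv : ∀ x, ContDiffAt ℝ 2 v (x, s)) (hvc : HasCompactSupport fun x => v (x, s)) :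
    ∫ x, spaceLap w (x, t) * v (x, s) - w (x, t) * spaceLap v (x, s) = 0 := by
  have hw2 := contDiff_slice hw
  have hv2 := contDiff_slice hv
  have hdd {a : E → ℝ} (ha : ContDiff ℝ 2 a) (e : E) : Continuous (dirDeriv e (dirDeriv e a)) :=
    continuous_dirDeriv (contDiff_dirDeriv_one ha e) e
  simp only [spaceLap_eq_sum_slice, Finset.sum_mul, Finset.mul_sum, ← Finset.sum_sub_distrib]
  have hleft (e : E) :
      Integrable fun x => dirDeriv e (dirDeriv e fun z => w (z, t)) x * v (x, s) :=
    integrable_mul_of_hasCompactSupport (hdd hw2 e) hv2.continuous hvc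
  have hright (e : E) :
      Integrable fun x => w (x, t) * dirDeriv e (dirDeriv e fun z => v (z, s)) x :=
    integrable_mul_of_hasCompactSupport hw2.continuous (hdd hv2 e)
      (hasCompactSupport_dirDeriv (hasCompactSupport_dirDeriv hvc e) e)
  rw [integral_finsetSum]
  · refine Finset.sum_eq_zero fun i _ => ?_
    rw [integral_sub (hleft _) (hright _), integral_dirDeriv_dirDeriv_mul hw2 hv2 hvc, sub_self]
  · exact fun i _ => (hleft _).sub (hright _)

lemma integral_greenDensity_eq_setIntegral (hv : VanishesOffCone R v) (ht : t ∈ Icc 0 T) :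
    ∫ x in closedBall 0 (R + T), greenDensity w v T t x = ∫ x, greenDensity w v T t x :=
  setIntegral_eq_integral_of_forall_compl_eq_zero fun _ hx => greenDensity_eq_zero hv ht hx

lemma hasDerivAt_integral_greenDensity (hw : IsQuarterWave w) (hv : IsQuarterWave v)
    (hvR : VanishesOffCone R v) (ht : t ∈ Ioo 0 T) :
    HasDerivAt (fun t => ∫ x, greenDensity w v T t x) 0 t := by
  set K := closedBall (0 : E) (R + T)
  have hK : IsCompact K := isCompact_closedBall _ _
  set d : ℝ → E → ℝ := fun t x =>
    spaceLap w (x, t) * v (x, T - t) - w (x, t) * spaceLap v (x, T - t)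
  have hcont : ContinuousOn (Function.uncurry d) (Ioo 0 T ×ˢ K) := by
    rintro ⟨s, x⟩ ⟨hs, -⟩
    have hws := hw.contDiffAt x hs.1
    have hvs := hv.contDiffAt x (sub_pos.2 hs.2)
    have hflip {F : E × ℝ → ℝ} (hF : ContinuousAt F (x, s)) :
        ContinuousAt (fun q : ℝ × E => F (q.2, q.1)) (s, x) :=
      hF.comp (f := fun q : ℝ × E => (q.2, q.1)) (by fun_prop)
    have hback {F : E × ℝ → ℝ} (hF : ContinuousAt F (x, T - s)) :
        ContinuousAt (fun q : ℝ × E => F (q.2, T - q.1)) (s, x) :=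
      hF.comp (f := fun q : ℝ × E => (q.2, T - q.1)) (by fun_prop)
    exact (((hflip (continuousAt_spaceLap hws)).mul (hback hvs.continuousAt)).sub
      ((hflip hws.continuousAt).mul (hback (continuousAt_spaceLap hvs)))).continuousWithinAt
  have hderiv := hasDerivAt_setIntegral_of_isCompact (μ := volume) hK isOpen_Ioo
    (fun s hs => (continuousOn_greenDensity hw hv).comp (f := fun x => (s, x)) (by fun_prop)
      fun x _ => ⟨Ioo_subset_Icc_self hs, mem_univ x⟩) hcont
    (fun s hs x _ => hasDerivAt_greenDensity hw hv x hs) ht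
  have hvout : ∀ x ∉ K, v (x, T - t) = 0 := fun x =>
    hvR.eq_zero_of_notMem_closedBall (Ioo_subset_Icc_self ht)
  have hzero : ∫ x in K, d t x = 0 := by
    rw [← integral_spaceLap_mul_sub_eq_zero (fun x => hw.contDiffAt x ht.1)
      (fun x => hv.contDiffAt x (sub_pos.2 ht.2)) (.intro hK hvout)]
    refine setIntegral_eq_integral_of_forall_compl_eq_zero fun x hx => ?_
    simp only [d, hvout x hx, (vanishesOffCone_spaceLap hvR).eq_zero_of_notMem_closedBall
      (Ioo_subset_Icc_self ht) hx, mul_zero, mul_zero, sub_zero]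
  rw [hzero] at hderiv
  refine hderiv.congr_of_eventuallyEq ?_
  filter_upwards [isOpen_Ioo.mem_nhds ht] with s hs
  exact (integral_greenDensity_eq_setIntegral hvR (Ioo_subset_Icc_self hs)).symm

lemma integral_greenDensity_eq (hw : IsQuarterWave w) (hv : IsQuarterWave v)
    (hvR : VanishesOffCone R v) (hT : 0 < T) :
    ∫ x, greenDensity w v T T x = ∫ x, greenDensity w v T 0 x := by
  have hcont : ContinuousOn (fun t => ∫ x, greenDensity w v T t x) (Icc 0 T) :=
    continuousOn_integral_of_compact_support (isCompact_closedBall 0 (R + T))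
      (continuousOn_greenDensity hw hv) fun t x => greenDensity_eq_zero hvR
  obtain ⟨s, -, hs⟩ := exists_hasDerivAt_eq_slope _ (fun _ => 0) hT hcont
    fun t => hasDerivAt_integral_greenDensity hw hv hvR
  exact sub_eq_zero.1 ((div_eq_zero_iff.1 hs.symm).resolve_right (sub_pos.2 hT).ne')

end Green

/-! ### Representation of solutions by potentials of their data -/

section Localization

open scoped ContDiff

variable {E : Type*} [NormedAddCommGroup E] [MeasurableSpace E] [BorelSpace E] {μ : Measure E}
  [IsFiniteMeasureOnCompacts μ] {F G χ : E → ℝ}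

lemma integrable_mul_of_continuousOn_tsupport (hF : ContinuousOn F (tsupport χ))
    (hχ : Continuous χ) (hχc : HasCompactSupport χ) : Integrable (fun z => F z * χ z) μ :=
  (integrableOn_iff_integrable_of_support_subset ((Function.support_mul_subset_right F χ).trans
    (subset_tsupport χ))).1 ((hF.mul hχ.continuousOn).integrableOn_compact hχc)

variable [NormedSpace ℝ E] [FiniteDimensional ℝ E] [μ.IsOpenPosMeasure]

lemma eqOn_of_forall_integral_mul_eq {O : Set E} (hO : IsOpen O) (hF : ContinuousOn F O)
    (hG : ContinuousOn G O) (h : ∀ χ : E → ℝ, ContDiff ℝ ∞ χ → HasCompactSupport χ →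
      tsupport χ ⊆ O → ∫ x, F x * χ x ∂μ = ∫ x, G x * χ x ∂μ) : EqOn F G O := by
  refine Measure.eqOn_open_of_ae_eq (μ := μ) ?_ hO hF hG
  have hzero := hO.ae_eq_zero_of_integral_contDiff_smul_eq_zero (μ := μ) (f := fun x => F x - G x)
    ((hF.sub hG).locallyIntegrableOn hO.measurableSet) fun χ hχ hχc hχO => by
      simp only [smul_eq_mul, mul_comm (χ _), sub_mul]
      rw [integral_sub, h χ hχ hχc hχO, sub_self]
      · exact integrable_mul_of_continuousOn_tsupport (hF.mono hχO) hχ.continuous hχc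
      · exact integrable_mul_of_continuousOn_tsupport (hG.mono hχO) hχ.continuous hχc
  refine (ae_restrict_iff' hO.measurableSet).2 (hzero.mono fun x hx hxO => ?_)
  exact sub_eq_zero.1 (hx hxO)

end Localization

section Representation

open scoped ContDiff InnerProductSpace

variable {E : Type*} [NormedAddCommGroup E] {b c t : ℝ} {f χ w₀ w₁ : E → ℝ} {S T : Set E}
  {w : E × ℝ → ℝ}

lemma lightCone_anti (h : S ⊆ T) : lightCone T ⊆ lightCone S :=
  fun _ hp => ⟨hp.1, fun z hz => hp.2 z (h hz)⟩

lemma mem_lightCone_of_forall_mem (ht : 0 < t) (hT : ∀ z ∈ T, (z, t) ∈ lightCone S) {x : E}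
    (hx : x ∈ S) : (x, t) ∈ lightCone T :=
  ⟨ht, fun z hz => by simpa only [norm_sub_rev] using (hT z hz).2 x hx⟩

variable [InnerProductSpace ℝ E] [FiniteDimensional ℝ E] [MeasurableSpace E] [BorelSpace E]

lemma continuousOn_potential (hχ : Continuous χ) (hχc : HasCompactSupport χ) :
    ContinuousOn (potential b χ) (lightCone (tsupport χ)) := by
  refine continuousOn_integral_of_compact_support hχc ?_ fun p z _ hz => by
    rw [image_eq_zero_of_notMem_tsupport hz, mul_zero]
  rintro ⟨p, z⟩ ⟨hp, -⟩
  refine ContinuousAt.continuousWithinAt ?_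
  by_cases hz : z ∈ tsupport χ
  · exact (ContinuousAt.comp (f := Function.uncurry coneForm)
      (hasDerivAt_besselKernel_of_pos b (coneForm_pos hp hz)).continuousAt
      continuous_coneForm.continuousAt).mul (hχ.comp continuous_snd).continuousAt
  · refine continuousAt_const.congr (f := fun _ => (0 : ℝ)) ?_
    filter_upwards [continuous_snd.continuousAt.eventually
      (notMem_tsupport_iff_eventuallyEq.1 hz)] with q hq
    rw [Function.uncurry, hq, Pi.zero_apply, mul_zero]

lemma integrable_potential_mul (hχ : Continuous χ) (hχc : HasCompactSupport χ) (hf : Continuous f)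
    (hfc : HasCompactSupport f) (ht : ∀ x ∈ tsupport f, (x, t) ∈ lightCone (tsupport χ)) :
    Integrable fun x => potential b χ (x, t) * f x :=
  integrable_mul_of_continuousOn_tsupport
    ((continuousOn_potential hχ hχc).comp (f := fun x => (x, t)) (by fun_prop) ht) hf hfc

lemma integral_potential_mul_comm (hf : Continuous f) (hfc : HasCompactSupport f)
    (hχ : Continuous χ) (hχc : HasCompactSupport χ)
    (ht : ∀ x ∈ tsupport f, (x, t) ∈ lightCone (tsupport χ)) :
    ∫ x, potential b χ (x, t) * f x = ∫ z, potential b f (z, t) * χ z := by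
  set F : E → E → ℝ := fun x z => besselKernel b (coneForm (x, t) z) * χ z * f x
  have hsupp : tsupport (Function.uncurry F) ⊆ tsupport f ×ˢ tsupport χ := by
    refine closure_minimal ?_ ((isClosed_tsupport f).prod (isClosed_tsupport χ))
    rintro ⟨x, z⟩ hxz
    simp only [Function.mem_support, Function.uncurry, F, ne_eq, mul_eq_zero, not_or] at hxz
    exact ⟨subset_tsupport f hxz.2, subset_tsupport χ hxz.1.2⟩
  have hcont : Continuous (Function.uncurry F) := by
    refine continuous_of_tsupport fun q hq => ?_
    have hq' := hsupp hq
    have hkernel : ContinuousAt (fun q : E × E => besselKernel b (coneForm (q.1, t) q.2)) q :=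
      (hasDerivAt_besselKernel_of_pos b (coneForm_pos (ht _ hq'.1) hq'.2)).continuousAt.comp
        (f := fun q : E × E => coneForm (q.1, t) q.2)
        (continuous_coneForm.comp (by fun_prop : Continuous fun q : E × E =>
          (((q.1, t) : E × ℝ), q.2))).continuousAt
    exact (hkernel.mul (hχ.comp continuous_snd).continuousAt).mul
      (hf.comp continuous_fst).continuousAt
  have hswap := integral_integral_swap_of_hasCompactSupport (μ := volume) (ν := volume) hcont
    ((hfc.prod hχc).of_isClosed_subset (isClosed_tsupport _) hsupp)
  simp only [potential, ← integral_mul_const]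
  refine hswap.trans (integral_congr_ae (Eventually.of_forall fun z => ?_))
  simp only [F, coneForm, norm_sub_rev z, mul_right_comm]

/-- The solution of `w_ττ = Δw + w / 4` with data `(w, w_τ) = (w₀, w₁)` at time zero, up to a
constant factor and inside the light cone of the supports of the data. -/
def wavePotential (w₀ w₁ : E → ℝ) (p : E × ℝ) : ℝ :=
  potential (waveOrder E) w₁ p + 2 * p.2 * potential (waveOrder E - 1) w₀ p

lemma continuousOn_wavePotential (hw₀ : Continuous w₀) (hw₀c : HasCompactSupport w₀)
    (hw₁ : Continuous w₁) (hw₁c : HasCompactSupport w₁) :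
    ContinuousOn (wavePotential w₀ w₁) (lightCone (tsupport w₀ ∪ tsupport w₁)) :=
  ((continuousOn_potential hw₁ hw₁c).mono (lightCone_anti subset_union_right)).add
    ((continuous_const.mul continuous_snd).continuousOn.mul
      ((continuousOn_potential hw₀ hw₀c).mono (lightCone_anti subset_union_left)))

lemma velocityWave_data_eq_potential (w₀ w₁ : E → ℝ) (hχ : ContDiff ℝ ∞ χ)
    (hχc : HasCompactSupport χ)
    (hcone₀ : ∀ x ∈ tsupport w₀, (x, t) ∈ lightCone (tsupport χ))
    (hcone₁ : ∀ x ∈ tsupport w₁, (x, t) ∈ lightCone (tsupport χ)) (x : E) :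
    w₁ x * velocityWave χ (x, t) + w₀ x * timeDeriv (velocityWave χ) (x, t)
      = 2 ^ (Module.finrank ℝ E + 2) * (potential (waveOrder E) χ (x, t) * w₁ x
        + 2 * t * (potential (waveOrder E - 1) χ (x, t) * w₀ x)) := by
  have h₁ : w₁ x * velocityWave χ (x, t)
      = w₁ x * (2 ^ (Module.finrank ℝ E + 2) * potential (waveOrder E) χ (x, t)) := by
    by_cases hx : x ∈ tsupport w₁
    · rw [velocityWave_eq_potential hχ hχc (hcone₁ x hx)]
    · rw [image_eq_zero_of_notMem_tsupport hx, zero_mul, zero_mul]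
  have h₀ : w₀ x * timeDeriv (velocityWave χ) (x, t)
      = w₀ x * (2 ^ (Module.finrank ℝ E + 2) *
        (2 * t * potential (waveOrder E - 1) χ (x, t))) := by
    by_cases hx : x ∈ tsupport w₀
    · rw [timeDeriv_velocityWave_eq_potential hχ hχc (hcone₀ x hx)]
    · rw [image_eq_zero_of_notMem_tsupport hx, zero_mul, zero_mul]
  rw [h₁, h₀]
  ring

lemma integral_velocityWave_data (hw₀ : Continuous w₀) (hw₀c : HasCompactSupport w₀)
    (hw₁ : Continuous w₁) (hw₁c : HasCompactSupport w₁) (hχ : ContDiff ℝ ∞ χ)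
    (hχc : HasCompactSupport χ) (ht : 0 < t)
    (hχS : ∀ z ∈ tsupport χ, (z, t) ∈ lightCone (tsupport w₀ ∪ tsupport w₁)) :
    ∫ x, w₁ x * velocityWave χ (x, t) + w₀ x * timeDeriv (velocityWave χ) (x, t)
      = 2 ^ (Module.finrank ℝ E + 2) * ∫ x, wavePotential w₀ w₁ (x, t) * χ x := by
  have hcone₀ : ∀ x ∈ tsupport w₀, (x, t) ∈ lightCone (tsupport χ) := fun x hx =>
    mem_lightCone_of_forall_mem ht hχS (Or.inl hx)
  have hcone₁ : ∀ x ∈ tsupport w₁, (x, t) ∈ lightCone (tsupport χ) := fun x hx =>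
    mem_lightCone_of_forall_mem ht hχS (Or.inr hx)
  have hswap {b : ℝ} {a : E → ℝ} (ha : Continuous a) (hac : HasCompactSupport a)
      (hcone : ∀ x ∈ tsupport a, (x, t) ∈ lightCone (tsupport χ)) :
      Integrable (fun x => potential b χ (x, t) * a x) ∧
        Integrable (fun x => potential b a (x, t) * χ x) ∧
        ∫ x, potential b χ (x, t) * a x = ∫ x, potential b a (x, t) * χ x :=
    ⟨integrable_potential_mul hχ.continuous hχc ha hac hcone,
      integrable_potential_mul ha hac hχ.continuous hχc fun z hz =>
        mem_lightCone_of_forall_mem ht hcone hz,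
      integral_potential_mul_comm ha hac hχ.continuous hχc hcone⟩
  obtain ⟨hi₁, hj₁, he₁⟩ := hswap (b := waveOrder E) hw₁ hw₁c hcone₁
  obtain ⟨hi₀, hj₀, he₀⟩ := hswap (b := waveOrder E - 1) hw₀ hw₀c hcone₀
  simp only [velocityWave_data_eq_potential w₀ w₁ hχ hχc hcone₀ hcone₁, wavePotential, add_mul,
    mul_assoc (2 * t)]
  rw [integral_const_mul, integral_add hi₁ (hi₀.const_mul _), integral_add hj₁ (hj₀.const_mul _),
    integral_const_mul, integral_const_mul, he₁, he₀]

lemma isQuarterWave_velocityWave (hχ : ContDiff ℝ ∞ χ) (hχc : HasCompactSupport χ) :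
    IsQuarterWave (velocityWave χ) :=
  ⟨(contDiff_infty.1 (contDiff_velocityWave hχ) 2).contDiffOn,
    fun _ hp => timeDeriv_timeDeriv_velocityWave hχ hχc hp⟩

lemma integral_velocityWave_data_eq (hw : IsQuarterWave w) (hχ : ContDiff ℝ ∞ χ)
    (hχc : HasCompactSupport χ) (hc : ∀ x, timeDeriv (velocityWave χ) (x, 0) = c * χ x)
    (ht : 0 < t) :
    ∫ x, velocity w (x, 0) * velocityWave χ (x, t) + w (x, 0) * timeDeriv (velocityWave χ) (x, t)
      = ∫ x, c * w (x, t) * χ x := by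
  obtain ⟨R, hR⟩ := hχc.isCompact.isBounded.subset_closedBall 0
  have hχR (z : E) (hz : R < ‖z‖) : χ z = 0 := image_eq_zero_of_notMem_tsupport fun h =>
    hz.not_ge (mem_closedBall_zero_iff.1 (hR h))
  have hvelocity (x : E) {s : ℝ} (hs : 0 ≤ s) :
      velocity (velocityWave χ) (x, s) = timeDeriv (velocityWave χ) (x, s) :=
    velocity_eq_timeDeriv ((contDiff_velocityWave hχ).differentiable (by simp) _) hs
  have hgreen := integral_greenDensity_eq hw (isQuarterWave_velocityWave hχ hχc)
    (vanishesOffCone_velocityWave hχR) ht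
  simp only [greenDensity, sub_self, sub_zero, velocityWave_snd_eq_zero, hvelocity _ le_rfl,
    hvelocity _ ht.le, hc, mul_zero, zero_add] at hgreen
  rw [← hgreen]
  exact integral_congr_ae (Eventually.of_forall fun x => by ring)

lemma exists_mul_eq_wavePotential (E : Type*) [NormedAddCommGroup E] [InnerProductSpace ℝ E]
    [FiniteDimensional ℝ E] [MeasurableSpace E] [BorelSpace E] :
    ∃ c : ℝ, ∀ (w : E × ℝ → ℝ) (w₀ w₁ : E → ℝ), IsQuarterWave w → (∀ x, w (x, 0) = w₀ x) →
      (∀ x, velocity w (x, 0) = w₁ x) → HasCompactSupport w₀ → HasCompactSupport w₁ →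
      EqOn (fun p => c * w p) (wavePotential w₀ w₁) (lightCone (tsupport w₀ ∪ tsupport w₁)) := by
  obtain ⟨c, hc⟩ := exists_timeDeriv_velocityWave_snd_eq_zero E
  refine ⟨c / 2 ^ (Module.finrank ℝ E + 2), fun w w₀ w₁ hw h₀ h₁ hw₀c hw₁c => ?_⟩
  rintro ⟨x, t⟩ hp
  have ht : 0 < t := hp.1
  have hslice {F : E × ℝ → ℝ} (hF : ContinuousOn F (univ ×ˢ Ici 0)) {s : ℝ} (hs : 0 ≤ s) :
      Continuous fun x => F (x, s) :=
    hF.comp_continuous (by fun_prop) fun x => ⟨mem_univ x, hs⟩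
  obtain rfl : (fun x => w (x, 0)) = w₀ := funext h₀
  obtain rfl : (fun x => velocity w (x, 0)) = w₁ := funext h₁
  have hw₀ := hslice hw.contDiffOn.continuousOn le_rfl
  have hw₁ := hslice hw.continuousOn_velocity le_rfl
  refine eqOn_of_forall_integral_mul_eq (μ := volume)
    (F := fun z => c / 2 ^ (Module.finrank ℝ E + 2) * w (z, t))
    ((isOpen_lightCone (hw₀c.isCompact.union hw₁c.isCompact)).preimage
      (by fun_prop : Continuous fun z : E => (z, t)))
    (continuous_const.mul (hslice hw.contDiffOn.continuousOn ht.le)).continuousOn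
    ((continuousOn_wavePotential hw₀ hw₀c hw₁ hw₁c).comp (by fun_prop) fun _ hz => hz)
    (fun χ hχ hχc hχO => ?_) hp
  have hdata := integral_velocityWave_data hw₀ hw₀c hw₁ hw₁c hχ hχc ht hχO
  rw [integral_velocityWave_data_eq hw hχ hχc (hc χ hχ) ht] at hdata
  simp only [div_mul_eq_mul_div, integral_div, hdata]
  exact mul_div_cancel_left₀ _ (by positivity)

end Representation

/-! ### Sign of the gradient of a potential -/

section Gradient

open scoped InnerProductSpace

variable {E : Type*} [NormedAddCommGroup E] [InnerProductSpace ℝ E]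

/-- The integrand of `-1/2` times the derivative of `wavePotential w₀ w₁` at `p` in the spatial
direction `e`. -/
def gradientDensity (w₀ w₁ : E → ℝ) (p : E × ℝ) (e y : E) : ℝ :=
  ⟪p.1 - y, e⟫_ℝ * (besselKernel (waveOrder E - 1) (coneForm p y) * w₁ y
    + 2 * p.2 * besselKernel (waveOrder E - 1 - 1) (coneForm p y) * w₀ y)

lemma gradientDensity_eq_add (w₀ w₁ : E → ℝ) (p : E × ℝ) (e y : E) :
    gradientDensity w₀ w₁ p e y
      = besselKernel (waveOrder E - 1) (coneForm p y) * ⟪p.1 - y, e⟫_ℝ * w₁ y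
        + 2 * p.2 *
          (besselKernel (waveOrder E - 1 - 1) (coneForm p y) * ⟪p.1 - y, e⟫_ℝ * w₀ y) := by
  rw [gradientDensity]
  ring

variable [FiniteDimensional ℝ E] [MeasurableSpace E] [BorelSpace E] {b : ℝ} {χ w₀ w₁ : E → ℝ}
  {p : E × ℝ}

lemma integrable_besselKernel_mul_inner (hχ : Continuous χ) (hχc : HasCompactSupport χ)
    (hp : p ∈ lightCone (tsupport χ)) (e : E) :
    Integrable fun y => besselKernel b (coneForm p y) * ⟪p.1 - y, e⟫_ℝ * χ y := by
  have hkernel : ContinuousOn (fun y => besselKernel b (coneForm p y)) (tsupport χ) :=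
    (continuousOn_besselKernel_coneForm (T := {p}) (Or.inr (singleton_subset_iff.2 hp))).comp
      (f := fun y => (p, y)) (by fun_prop) fun _ hy => ⟨mem_singleton p, hy⟩
  exact integrable_mul_of_continuousOn_tsupport (hkernel.mul (by fun_prop)) hχ hχc

lemma hasLineDerivAt_space_potential (hχ : Continuous χ) (hχc : HasCompactSupport χ)
    (hp : p ∈ lightCone (tsupport χ)) (e : E) : HasLineDerivAt ℝ (potential b χ)
      (-2 * ∫ y, besselKernel (b - 1) (coneForm p y) * ⟪p.1 - y, e⟫_ℝ * χ y) p (e, 0) := by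
  refine (hasLineDerivAt_potential hχ hχc (e, 0) (Or.inr hp)).congr_deriv ?_
  rw [← integral_const_mul]
  congr 1 with y
  ring

lemma integrable_gradientDensity (hw₀ : Continuous w₀) (hw₀c : HasCompactSupport w₀)
    (hw₁ : Continuous w₁) (hw₁c : HasCompactSupport w₁)
    (hp : p ∈ lightCone (tsupport w₀ ∪ tsupport w₁)) (e : E) :
    Integrable (gradientDensity w₀ w₁ p e) := by
  simp only [funext (gradientDensity_eq_add w₀ w₁ p e)]
  exact (integrable_besselKernel_mul_inner hw₁ hw₁c (lightCone_anti subset_union_right hp) e).add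
    ((integrable_besselKernel_mul_inner hw₀ hw₀c (lightCone_anti subset_union_left hp)
      e).const_mul _)

lemma dirDeriv_wavePotential (hw₀ : Continuous w₀) (hw₀c : HasCompactSupport w₀)
    (hw₁ : Continuous w₁) (hw₁c : HasCompactSupport w₁)
    (hp : p ∈ lightCone (tsupport w₀ ∪ tsupport w₁)) (e : E) :
    dirDeriv (e, 0) (wavePotential w₀ w₁) p = -2 * ∫ y, gradientDensity w₀ w₁ p e y := by
  have hp₀ := lightCone_anti subset_union_left hp
  have hp₁ := lightCone_anti subset_union_right hp
  have hline₁ := hasLineDerivAt_space_potential (b := waveOrder E) hw₁ hw₁c hp₁ e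
  have hline₀ := hasLineDerivAt_space_potential (b := waveOrder E - 1) hw₀ hw₀c hp₀ e
  have htime : HasLineDerivAt ℝ (fun q : E × ℝ => 2 * q.2) 0 p (e, 0) := by
    simpa [HasLineDerivAt] using hasDerivAt_const (0 : ℝ) (2 * p.2)
  have hline : HasLineDerivAt ℝ (wavePotential w₀ w₁) _ p (e, 0) :=
    HasDerivAt.add hline₁ (hasLineDerivAt_mul htime hline₀)
  rw [dirDeriv, hline.lineDeriv]
  simp only [gradientDensity_eq_add]
  rw [integral_add (integrable_besselKernel_mul_inner hw₁ hw₁c hp₁ e)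
    ((integrable_besselKernel_mul_inner hw₀ hw₀c hp₀ e).const_mul _), integral_const_mul]
  ring

end Gradient

section Positivity

open scoped InnerProductSpace

lemma mul_sub_abs_le_mul_add {C δ d I k k' l a₀ a₁ : ℝ} (hC : 0 ≤ C) (hδ : 0 ≤ δ)
    (hk : 0 ≤ k) (hlk : l ≤ 2 * k) (hkl : k ≤ 2 * l) (hk' : |k' - k / 2| ≤ δ * k)
    (hI : |I| ≤ C * d ^ 2) (ha : 0 ≤ a₁ + a₀ / 2) (hIa : a₁ + a₀ / 2 ≠ 0 → d ^ 2 ≤ I) :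
    l * d ^ 2 * ((a₁ + a₀ / 2) / 2 - 2 * C * δ * |a₀|) ≤ I * (k * a₁ + k' * a₀) := by
  have hmain : l / 2 * (d ^ 2 * (a₁ + a₀ / 2)) ≤ k * (I * (a₁ + a₀ / 2)) := by
    have hda : d ^ 2 * (a₁ + a₀ / 2) ≤ I * (a₁ + a₀ / 2) := by
      by_cases h : a₁ + a₀ / 2 = 0
      · rw [h, mul_zero, mul_zero]
      · exact mul_le_mul_of_nonneg_right (hIa h) ha
    exact (mul_le_mul_of_nonneg_right (by linarith) (by positivity)).trans
      (mul_le_mul_of_nonneg_left hda hk)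
  have herror : |I * ((k' - k / 2) * a₀)| ≤ C * d ^ 2 * (δ * (2 * l) * |a₀|) := by
    rw [abs_mul, abs_mul]
    have : |k' - k / 2| ≤ δ * (2 * l) := hk'.trans (by gcongr)
    gcongr
  linarith [neg_le_of_abs_le herror]

lemma exists_eventually_coneForm_mem_Icc (E : Type*) [NormedAddCommGroup E] {D η : ℝ}
    (hD : 0 ≤ D) (hη : 0 < η) :
    ∃ θ > 0, ∀ᶠ t in atTop, ∀ x q y : E, ‖q - y‖ ≤ D → ‖x - q‖ ≤ θ * t → ‖x - y‖ < t ∧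
      coneForm (x, t) y ∈ Icc ((1 - η) * t ^ 2) (t ^ 2) ∧
      |coneForm (x, t) y - coneForm (x, t) q| ≤ t := by
  have hθ : 0 < min (1 / 4) (min η (1 / (3 * D + 1))) := by positivity
  have hθ4 := min_le_left (1 / 4) (min η (1 / (3 * D + 1)))
  have hθη := (min_le_right (1 / 4) (min η (1 / (3 * D + 1)))).trans (min_le_left _ _)
  have hθD := (min_le_right (1 / 4) (min η (1 / (3 * D + 1)))).trans (min_le_right _ _)
  set θ := min (1 / 4) (min η (1 / (3 * D + 1)))
  rw [le_div_iff₀ (by positivity)] at hθD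
  refine ⟨θ, hθ, ?_⟩
  filter_upwards [eventually_ge_atTop (D / θ), eventually_gt_atTop 0] with t htD ht x q y hqy hxq
  rw [div_le_iff₀' hθ] at htD
  have hxy : ‖x - y‖ ≤ 2 * θ * t := by
    linarith [norm_sub_le_norm_sub_add_norm_sub x q y]
  refine ⟨by nlinarith, ⟨?_, ?_⟩, ?_⟩
  · have hsq : ‖x - y‖ ^ 2 ≤ η * t ^ 2 := calc
      ‖x - y‖ ^ 2 ≤ (2 * θ * t) ^ 2 := by gcongr
      _ = 4 * θ * θ * t ^ 2 := by ring
      _ ≤ 1 * η * t ^ 2 := by gcongr; linarith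
      _ = η * t ^ 2 := by rw [one_mul]
    rw [coneForm]
    linarith
  · exact sub_le_self _ (sq_nonneg _)
  · have hdiff : |‖x - q‖ - ‖x - y‖| ≤ D := by
      refine (abs_norm_sub_norm_le _ _).trans ?_
      rwa [sub_sub_sub_cancel_left, norm_sub_rev]
    calc |coneForm (x, t) y - coneForm (x, t) q|
        = |‖x - q‖ - ‖x - y‖| * (‖x - q‖ + ‖x - y‖) := by
          rw [← abs_of_nonneg (show 0 ≤ ‖x - q‖ + ‖x - y‖ by positivity), ← abs_mul, coneForm,
            coneForm]
          congr 1
          ring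
      _ ≤ D * (θ * t + 2 * θ * t) := by gcongr
      _ ≤ t := by nlinarith

variable {E : Type*} [NormedAddCommGroup E] [InnerProductSpace ℝ E] {C δ t : ℝ} {w₀ w₁ : E → ℝ}
  {x q : E} {s : Set ℝ}

lemma abs_inner_le_of_norm_sub_le {D ε : ℝ} (hε : 0 < ε) (hxq : ε ≤ ‖x - q‖) {y : E}
    (hqy : ‖q - y‖ ≤ D) : |⟪x - y, x - q⟫_ℝ| ≤ (1 + D / ε) * ‖x - q‖ ^ 2 := by
  have hD : 0 ≤ D := (norm_nonneg _).trans hqy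
  calc |⟪x - y, x - q⟫_ℝ| ≤ ‖x - y‖ * ‖x - q‖ := abs_real_inner_le_norm _ _
    _ ≤ (‖x - q‖ + D) * ‖x - q‖ := by
        gcongr
        exact (norm_sub_le_norm_sub_add_norm_sub x q y).trans (by gcongr)
    _ ≤ (‖x - q‖ + D * (‖x - q‖ / ε)) * ‖x - q‖ := by
        gcongr
        exact le_mul_of_one_le_right hD ((one_le_div hε).2 hxq)
    _ = (1 + D / ε) * ‖x - q‖ ^ 2 := by ring

variable [FiniteDimensional ℝ E] [MeasurableSpace E] [BorelSpace E]

lemma integral_gradientDensity_pos (hw₀ : Continuous w₀) (hw₀c : HasCompactSupport w₀)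
    (hw₁ : Continuous w₁) (hw₁c : HasCompactSupport w₁) (hpos : ∀ y, 0 ≤ w₁ y + w₀ y / 2)
    (hxt : (x, t) ∈ lightCone (tsupport w₀ ∪ tsupport w₁)) (hxq : x ≠ q)
    (hbal : IsBalancedOn (waveOrder E - 1) δ t s) (hδ : 0 ≤ δ) (hδ' : δ ≤ 1 / 2)
    (hs : Convex ℝ s) (hs0 : s ⊆ Ioi 0) (hqs : coneForm (x, t) q ∈ s)
    (hcone : ∀ y ∈ tsupport w₀ ∪ tsupport w₁,
      coneForm (x, t) y ∈ s ∧ |coneForm (x, t) y - coneForm (x, t) q| ≤ t)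
    (hC : 0 ≤ C) (hinner : ∀ y ∈ tsupport w₀ ∪ tsupport w₁, |⟪x - y, x - q⟫_ℝ| ≤ C * ‖x - q‖ ^ 2)
    (hsep : ∀ y, w₁ y + w₀ y / 2 ≠ 0 → ‖x - q‖ ^ 2 ≤ ⟪x - y, x - q⟫_ℝ)
    (hmass : 4 * C * δ * ∫ y, |w₀ y| < ∫ y, w₁ y + w₀ y / 2) :
    0 < ∫ y, gradientDensity w₀ w₁ (x, t) (x - q) y := by
  set l := besselKernel (waveOrder E - 1) (coneForm (x, t) q)
  have hl : 0 < l := hbal.pos _ hqs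
  have hd : 0 < ‖x - q‖ := norm_pos_iff.2 (sub_ne_zero.2 hxq)
  have hw₀i : Integrable w₀ := hw₀.integrable_of_hasCompactSupport hw₀c
  have hhi : Integrable fun y => w₁ y + w₀ y / 2 :=
    (hw₁.integrable_of_hasCompactSupport hw₁c).add (hw₀i.div_const 2)
  have hbound (y : E) : l * ‖x - q‖ ^ 2 * ((w₁ y + w₀ y / 2) / 2 - 2 * C * δ * |w₀ y|)
      ≤ gradientDensity w₀ w₁ (x, t) (x - q) y := by
    by_cases hy : y ∈ tsupport w₀ ∪ tsupport w₁
    · obtain ⟨hys, hyq⟩ := hcone y hy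
      exact mul_sub_abs_le_mul_add hC hδ (hbal.pos _ hys).le
        (hbal.le_two_mul hδ' hxt.1 hs hs0 hys hqs (by rwa [abs_sub_comm]))
        (hbal.le_two_mul hδ' hxt.1 hs hs0 hqs hys hyq) (hbal.abs_sub_le _ hys) (hinner y hy)
        (hpos y) (hsep y)
    · rw [mem_union, not_or] at hy
      simp [gradientDensity, image_eq_zero_of_notMem_tsupport hy.1,
        image_eq_zero_of_notMem_tsupport hy.2]
  calc 0 < l * ‖x - q‖ ^ 2 * ((∫ y, w₁ y + w₀ y / 2) / 2 - 2 * C * δ * ∫ y, |w₀ y|) :=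
        mul_pos (by positivity) (by linarith)
    _ = ∫ y, l * ‖x - q‖ ^ 2 * ((w₁ y + w₀ y / 2) / 2 - 2 * C * δ * |w₀ y|) := by
        rw [integral_const_mul, integral_sub (hhi.div_const 2) (hw₀i.abs.const_mul _),
          integral_div, integral_const_mul]
    _ ≤ _ := integral_mono (((hhi.div_const 2).sub (hw₀i.abs.const_mul _)).const_mul _)
        (integrable_gradientDensity hw₀ hw₀c hw₁ hw₁c hxt _) hbound

lemma exists_eventually_dirDeriv_wavePotential_neg (hw₀ : Continuous w₀)
    (hw₀c : HasCompactSupport w₀) (hw₁ : Continuous w₁) (hw₁c : HasCompactSupport w₁)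
    (hpos : ∀ y, 0 ≤ w₁ y + w₀ y / 2) (hmass : 0 < ∫ y, w₁ y + w₀ y / 2) {K : Set E}
    (hK : Bornology.IsBounded K) {ε : ℝ} (hε : 0 < ε) :
    ∃ θ > 0, ∀ᶠ t in atTop, ∀ x, ∀ q ∈ K, ε ≤ ‖x - q‖ → ‖x - q‖ ≤ θ * t →
      (∀ y, w₁ y + w₀ y / 2 ≠ 0 → ‖x - q‖ ^ 2 ≤ ⟪x - y, x - q⟫_ℝ) →
      (x, t) ∈ lightCone (tsupport w₀ ∪ tsupport w₁) ∧
        dirDeriv (x - q, 0) (wavePotential w₀ w₁) (x, t) < 0 := by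
  set S := tsupport w₀ ∪ tsupport w₁
  have hKS : Bornology.IsBounded (K ∪ S) :=
    hK.union (hw₀c.isCompact.union hw₁c.isCompact).isBounded
  set D := diam (K ∪ S)
  have hD : 0 ≤ D := diam_nonneg
  set C := 1 + D / ε
  have hC : 0 ≤ C := by positivity
  obtain ⟨δ, hδ, hδ', hδmass⟩ :
      ∃ δ > 0, δ ≤ 1 / 2 ∧ 4 * C * δ * ∫ y, |w₀ y| < ∫ y, w₁ y + w₀ y / 2 := by
    obtain ⟨δ, hδ, hδmass⟩ := exists_pos_mul_lt hmass (4 * C * ∫ y, |w₀ y|)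
    refine ⟨min (1 / 2) δ, by positivity, min_le_left _ _, hδmass.trans_le' ?_⟩
    rw [mul_right_comm]
    gcongr
    exact min_le_right _ _
  obtain ⟨η, hη, hbal⟩ := eventually_isBalancedOn (waveOrder E - 1) hδ
  obtain ⟨θ, hθ, hgeom⟩ := exists_eventually_coneForm_mem_Icc E hD
    (lt_min hη one_half_pos : 0 < min η (1 / 2))
  refine ⟨θ, hθ, ?_⟩
  filter_upwards [hbal, hgeom, eventually_gt_atTop 0] with t hbal hgeom ht x q hq hεx hxθ hsep
  have hnorm {y : E} (hy : y ∈ K ∪ S) : ‖q - y‖ ≤ D :=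
    dist_eq_norm q y ▸ dist_le_diam_of_mem hKS (Or.inl hq) hy
  have hmem {y : E} (hy : y ∈ K ∪ S) := hgeom x q y (hnorm hy) hxθ
  have hxt : (x, t) ∈ lightCone S := ⟨ht, fun y hy => (hmem (Or.inr hy)).1⟩
  refine ⟨hxt, ?_⟩
  rw [dirDeriv_wavePotential hw₀ hw₀c hw₁ hw₁c hxt]
  refine mul_neg_of_neg_of_pos (by norm_num) ?_
  have hxq : x ≠ q := sub_ne_zero.1 (norm_pos_iff.1 (hε.trans_le hεx))
  have hIcc : Icc ((1 - min η (1 / 2)) * t ^ 2) (t ^ 2) ⊆ Ioi 0 := fun σ hσ =>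
    hσ.1.trans_lt' (mul_pos (by linarith [min_le_right η (1 / 2)]) (by positivity))
  exact integral_gradientDensity_pos hw₀ hw₀c hw₁ hw₁c hpos hxt hxq
    (hbal.mono (Icc_subset_Icc_left (by gcongr; exact min_le_left _ _))) hδ.le hδ'
    (convex_Icc _ _) hIcc (hmem (Or.inl hq)).2.1 (fun y hy => (hmem (Or.inr hy)).2) hC
    (fun y hy => abs_inner_le_of_norm_sub_le hε hεx (hnorm (Or.inr hy))) hsep hδmass

end Positivity

/-! ### Critical points of the solution -/

section Annulus

open scoped InnerProductSpace

variable {E : Type*} [NormedAddCommGroup E] [InnerProductSpace ℝ E]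

lemma exists_mem_closure_norm_sub_sq_le_inner [CompleteSpace E] {K : Set E} (hconv : Convex ℝ K)
    (hne : K.Nonempty) {a b : ℝ} (ha : 0 ≤ a) (hb : 0 ≤ b) {x : E}
    (hx : x ∈ (K + b • closedBall (0 : E) 1) \ (K + a • closedBall (0 : E) 1)) :
    ∃ q ∈ closure K, a ≤ ‖x - q‖ ∧ ‖x - q‖ ≤ b ∧
      ∀ y ∈ K, ‖x - q‖ ^ 2 ≤ ⟪x - y, x - q⟫_ℝ := by
  obtain ⟨hxb, hxa⟩ := hx
  obtain ⟨q, hq, hqmin⟩ := exists_norm_eq_iInf_of_complete_convex hne.closure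
    isClosed_closure.isComplete hconv.closure x
  refine ⟨q, hq, ?_, ?_, fun y hy => ?_⟩
  · refine closure_minimal (t := {y | a ≤ ‖x - y‖}) (fun y hy => ?_)
      (isClosed_le continuous_const (by fun_prop)) hq
    contrapose! hxa
    refine Set.mem_add.2 ⟨y, hy, x - y, ?_, by abel⟩
    rw [smul_unitClosedBall_of_nonneg ha]
    simpa using (not_le.1 hxa).le
  · rw [smul_unitClosedBall_of_nonneg hb] at hxb
    obtain ⟨k, hk, v, hv, rfl⟩ := Set.mem_add.1 hxb
    rw [hqmin]
    refine (ciInf_le ⟨0, Set.forall_mem_range.2 fun _ => norm_nonneg _⟩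
      (⟨k, subset_closure hk⟩ : closure K)).trans ?_
    simpa using hv
  · have hinner := (norm_eq_iInf_iff_real_inner_le_zero hconv.closure hq).1 hqmin y
      (subset_closure hy)
    rw [← sub_sub_sub_cancel_right x y q, inner_sub_left, real_inner_self_eq_norm_sq,
      real_inner_comm]
    linarith

variable [FiniteDimensional ℝ E] [MeasurableSpace E] [BorelSpace E]

theorem IsQuarterWave.exists_eventually_dirDeriv_ne_zero {w : E × ℝ → ℝ} {w₀ w₁ : E → ℝ}
    (hw : IsQuarterWave w) (h₀ : ∀ x, w (x, 0) = w₀ x) (h₁ : ∀ x, velocity w (x, 0) = w₁ x)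
    (hw₀ : Continuous w₀) (hw₀c : HasCompactSupport w₀) (hw₁ : Continuous w₁)
    (hw₁c : HasCompactSupport w₁) (hpos : ∀ y, 0 ≤ w₁ y + w₀ y / 2)
    (hmass : 0 < ∫ y, w₁ y + w₀ y / 2) {K : Set E} (hconv : Convex ℝ K) (hne : K.Nonempty)
    (hK : Bornology.IsBounded K) (hsupp : ∀ y, w₁ y + w₀ y / 2 ≠ 0 → y ∈ K) {ε : ℝ}
    (hε : 0 < ε) :
    ∃ θ > 0, ∀ᶠ t in atTop, ∀ a ≥ ε, ∀ b ∈ Icc 0 (θ * t),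
      ∀ x ∈ (K + b • closedBall (0 : E) 1) \ (K + a • closedBall (0 : E) 1),
        ∃ e : E, dirDeriv (e, 0) w (x, t) ≠ 0 := by
  obtain ⟨c, hc⟩ := exists_mul_eq_wavePotential E
  obtain ⟨θ, hθ, hneg⟩ := exists_eventually_dirDeriv_wavePotential_neg hw₀ hw₀c hw₁ hw₁c hpos hmass
    hK.closure hε
  refine ⟨θ, hθ, hneg.mono fun t hneg a ha b hb x hx => ?_⟩
  obtain ⟨q, hq, haq, hqb, hinner⟩ :=
    exists_mem_closure_norm_sub_sq_le_inner hconv hne (hε.le.trans ha) hb.1 hx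
  obtain ⟨hcone, hlt⟩ := hneg x q hq (ha.trans haq) (hqb.trans hb.2)
    fun y hy => hinner y (hsupp y hy)
  have hmul : c * dirDeriv (x - q, 0) w (x, t)
      = dirDeriv (x - q, 0) (wavePotential w₀ w₁) (x, t) := by
    rw [← (dirDeriv_congr ((hc w w₀ w₁ hw h₀ h₁ hw₀c hw₁c).eventuallyEq_of_mem
      ((isOpen_lightCone (hw₀c.isCompact.union hw₁c.isCompact)).mem_nhds hcone)) _).eq_of_nhds]
    exact (congrFun (dirDeriv_space_snd_mul (fun _ => c) w (x - q)) (x, t)).symm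
  exact ⟨x - q, right_ne_zero_of_mul (hmul.trans_ne hlt.ne)⟩

end Annulus

section Laplacian

open scoped Laplacian

lemma iteratedDeriv_two_comp_line {V : Type*} [NormedAddCommGroup V] [NormedSpace ℝ V]
    (v : V → ℝ) (x e : V) :
    iteratedDeriv 2 (fun a : ℝ => v (x + a • e)) 0 = dirDeriv e (dirDeriv e v) x := by
  have hderiv : deriv (fun a : ℝ => v (x + a • e)) = fun a => dirDeriv e v (x + a • e) := by
    funext a
    simp only [dirDeriv, lineDeriv, add_assoc, ← add_smul]
    rw [deriv_comp_const_add (fun r => v (x + r • e)), add_zero]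
  rw [iteratedDeriv_succ, iteratedDeriv_one, hderiv]
  rfl

variable {E : Type*} [NormedAddCommGroup E] [InnerProductSpace ℝ E] [FiniteDimensional ℝ E]

lemma sum_dirDeriv_dirDeriv_eq_laplacian {ι : Type*} [Fintype ι] (b : OrthonormalBasis ι ℝ E)
    {v : E → ℝ} (hv : ContDiff ℝ 2 v) (x : E) :
    ∑ i, dirDeriv (b i) (dirDeriv (b i) v) x = Δ v x := by
  rw [InnerProductSpace.laplacian_eq_iteratedFDeriv_orthonormalBasis v b]
  refine Finset.sum_congr rfl fun i _ => ?_
  have hdir : dirDeriv (b i) v = fun y => fderiv ℝ v y (b i) :=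
    funext fun y => (hv.differentiable two_ne_zero y).lineDeriv_eq_fderiv
  have hd : DifferentiableAt ℝ (fderiv ℝ v) x :=
    (hv.fderiv_right (m := 1) (by norm_num)).differentiable one_ne_zero x
  rw [dirDeriv, ((contDiff_dirDeriv_one hv (b i)).differentiable one_ne_zero x).lineDeriv_eq_fderiv,
    hdir, fderiv_clm_apply hd (differentiableAt_const _), iteratedFDeriv_two_apply]
  simp

lemma lap_eq_spaceLap {F : EuclideanSpace ℝ (Fin n) × ℝ → ℝ} {t : ℝ}
    (hF : ∀ x, ContDiffAt ℝ 2 F (x, t)) (x : EuclideanSpace ℝ (Fin n)) :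
    lap (fun z => F (z, t)) x = spaceLap F (x, t) := by
  rw [spaceLap_eq_sum_slice, sum_dirDeriv_dirDeriv_eq_laplacian _ (contDiff_slice hF),
    ← sum_dirDeriv_dirDeriv_eq_laplacian (EuclideanSpace.basisFun (Fin n) ℝ) (contDiff_slice hF)]
  simp only [lap, ← iteratedDeriv_two_comp_line, EuclideanSpace.basisFun_apply]

end Laplacian

section DampedWave

open scoped InnerProductSpace

variable {E : Type*} [NormedAddCommGroup E] [InnerProductSpace ℝ E] {F : E × ℝ → ℝ}

lemma hasDerivAt_exp_half (t : ℝ) : HasDerivAt (fun s => exp (s / 2)) (exp (t / 2) / 2) t := by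
  simpa [div_eq_mul_inv] using ((hasDerivAt_id t).div_const 2).exp

lemma velocity_exp_mul (hF : ContDiffOn ℝ 2 F (univ ×ˢ Ici 0)) (x : E) :
    velocity (fun p => exp (p.2 / 2) * F p) (x, 0) = velocity F (x, 0) + F (x, 0) / 2 := by
  have hd : DifferentiableOn ℝ F (univ ×ˢ Ici 0) := hF.differentiableOn two_ne_zero
  have hslice : DifferentiableWithinAt ℝ (fun s => F (x, s)) (Ici 0) 0 :=
    (hd (x, 0) ⟨mem_univ x, self_mem_Ici⟩).comp (0 : ℝ) (by fun_prop) fun s hs => ⟨mem_univ x, hs⟩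
  rw [velocity_eq_derivWithin hd, velocity_eq_derivWithin
    (DifferentiableOn.fun_mul (by fun_prop) hd)]
  simpa [add_comm, div_eq_inv_mul] using ((hasDerivAt_exp_half 0).hasDerivWithinAt.fun_mul
    hslice.hasDerivWithinAt).derivWithin (uniqueDiffOn_Ici 0 0 self_mem_Ici)

variable [FiniteDimensional ℝ E]

lemma dirDeriv_eq_inner_gradient {v : E → ℝ} {x : E} (hv : DifferentiableAt ℝ v x) (e : E) :
    dirDeriv e v x = ⟪gradient v x, e⟫_ℝ := by
  rw [dirDeriv, hv.lineDeriv_eq_fderiv, gradient, InnerProductSpace.toDual_symm_apply]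

lemma dirDeriv_space_snd_mul_eq_inner_gradient (a : ℝ → ℝ) {x : E} {t : ℝ}
    (hF : ContDiffAt ℝ 2 F (x, t)) (e : E) :
    dirDeriv (e, 0) (fun p => a p.2 * F p) (x, t)
      = a t * ⟪gradient (fun z => F (z, t)) x, e⟫_ℝ := by
  have hslice : DifferentiableAt ℝ (fun z => F (z, t)) x :=
    (hF.differentiableAt two_ne_zero).comp x (by fun_prop)
  rw [dirDeriv_space_snd_mul, ← dirDeriv_eq_inner_gradient hslice,
    ← dirDeriv_space_eq_dirDeriv_slice]

/-- Classical solutions of the damped wave equation `∂ₜ²F - ΔF + ∂ₜF = 0` on `E × (0, ∞)`, of class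
`C²` up to time zero. -/
structure IsDampedWave (F : E × ℝ → ℝ) : Prop where
  contDiffOn : ContDiffOn ℝ 2 F (univ ×ˢ Ici 0)
  damped_wave_eq : ∀ p, 0 < p.2 → timeDeriv (timeDeriv F) p - spaceLap F p + timeDeriv F p = 0

lemma isDampedWave_of_lap {u : EuclideanSpace ℝ (Fin n) → ℝ → ℝ}
    (hreg : ContDiffOn ℝ 2 (fun p : EuclideanSpace ℝ (Fin n) × ℝ => u p.1 p.2) (univ ×ˢ Ici 0))
    (hpde : ∀ x, ∀ t > (0 : ℝ),
      deriv (deriv (fun s => u x s)) t - lap (fun z => u z t) x + deriv (fun s => u x s) t = 0) :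
    IsDampedWave fun p : EuclideanSpace ℝ (Fin n) × ℝ => u p.1 p.2 := by
  refine ⟨hreg, fun p hp => ?_⟩
  rw [← lap_eq_spaceLap (t := p.2) (fun x => hreg.contDiffAt (univ_prod_Ici_mem_nhds hp)) p.1]
  simp only [timeDeriv_eq_deriv]
  exact hpde p.1 p.2 hp

lemma IsDampedWave.isQuarterWave_exp_mul (hF : IsDampedWave F) :
    IsQuarterWave fun p => exp (p.2 / 2) * F p := by
  refine ⟨ContDiffOn.mul (by fun_prop) hF.contDiffOn, fun p hp => ?_⟩
  have hFat {q : E × ℝ} (hq : 0 < q.2) : ContDiffAt ℝ 2 F q :=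
    hF.contDiffOn.contDiffAt (univ_prod_Ici_mem_nhds hq)
  have hdiff {q : E × ℝ} (hq : 0 < q.2) : DifferentiableAt ℝ F q :=
    (hFat hq).differentiableAt two_ne_zero
  have hdiff' : DifferentiableAt ℝ (timeDeriv F) p :=
    (contDiffAt_dirDeriv (k := 1) (hFat hp) _).differentiableAt one_ne_zero
  have hfirst : timeDeriv (fun q => exp (q.2 / 2) * F q)
      =ᶠ[𝓝 p] fun q => exp (q.2 / 2) * (2⁻¹ * F q + timeDeriv F q) := by
    filter_upwards [(isOpen_Ioi.preimage continuous_snd).mem_nhds hp] with q hq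
    rw [timeDeriv_snd_mul (hasDerivAt_exp_half q.2) (hdiff hq)]
    ring
  have hsum : timeDeriv (fun q => 2⁻¹ * F q + timeDeriv F q) p
      = 2⁻¹ * timeDeriv F p + timeDeriv (timeDeriv F) p := by
    rw [timeDeriv, dirDeriv_add ((hdiff hp).const_mul _) hdiff']
    congr 1
    simpa [timeDeriv] using timeDeriv_snd_mul (hasDerivAt_const p.2 (2⁻¹ : ℝ)) (hdiff hp)
  rw [timeDeriv, (dirDeriv_congr hfirst _).eq_of_nhds, ← timeDeriv,
    timeDeriv_snd_mul (hasDerivAt_exp_half p.2) (((hdiff hp).const_mul _).fun_add hdiff'), hsum,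
    lapQuarter_snd_mul (fun s => exp (s / 2)), lapQuarter]
  linear_combination exp (p.2 / 2) * hF.damped_wave_eq p hp

theorem no_critical_points_in_annulus_general {f g : E → ℝ} (hF : IsDampedWave F)
    (hf : ∀ x, F (x, 0) = f x) (hg : ∀ x, velocity F (x, 0) = g x) (hfc : HasCompactSupport f)
    (hgc : HasCompactSupport g) (hne : f + g ≠ 0) (hpos : ∀ x, 0 ≤ f x + g x) {ε : ℝ}
    (hε : 0 < ε) :
    ∃ η > 0, ∀ a b : ℝ → ℝ, (∀ᶠ t in atTop, ε ≤ a t) → (∀ᶠ t in atTop, b t ∈ Icc 0 (η * t)) →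
      ∀ᶠ t in atTop, ∀ x ∈ (convexHull ℝ (tsupport (f + g)) + b t • closedBall (0 : E) 1) \
          (convexHull ℝ (tsupport (f + g)) + a t • closedBall (0 : E) 1),
        gradient (fun z => F (z, t)) x ≠ 0 := by
  borelize E
  have hslice {G : E × ℝ → ℝ} (hG : ContinuousOn G (univ ×ˢ Ici 0)) :
      Continuous fun x => G (x, 0) :=
    hG.comp_continuous (by fun_prop) fun x => ⟨mem_univ x, self_mem_Ici⟩
  have hfcont : Continuous f := funext hf ▸ hslice hF.contDiffOn.continuousOn
  have hgcont : Continuous g := funext hg ▸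
    hslice (continuousOn_velocity (hF.contDiffOn.of_le one_le_two))
  -- `exp (t / 2) * F` has data `w₀ = f` and `w₁ = g + f / 2`, so that `w₁ + w₀ / 2 = f + g`
  have hdata (x : E) : g x + f x / 2 + f x / 2 = (f + g) x := by
    rw [Pi.add_apply]
    ring
  obtain ⟨x₀, hx₀⟩ := Function.ne_iff.1 hne
  have hsupp : Function.support (f + g) ⊆ convexHull ℝ (tsupport (f + g)) :=
    (subset_tsupport _).trans (subset_convexHull ℝ _)
  obtain ⟨η, hη, hw⟩ := hF.isQuarterWave_exp_mul.exists_eventually_dirDeriv_ne_zero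
    (w₀ := f) (w₁ := fun x => g x + f x / 2) (K := convexHull ℝ (tsupport (f + g)))
    (by simp [hf]) (fun x => by rw [velocity_exp_mul hF.contDiffOn, hf, hg]) hfcont hfc
    (hgcont.add (hfcont.div_const 2)) (hgc.add (hfc.comp_left (g := (· / 2)) (zero_div 2)))
    (fun x => (hpos x).trans_eq (hdata x).symm)
    (by
      simp only [hdata]
      exact (hfcont.add hgcont).integral_pos_of_hasCompactSupport_nonneg_nonzero (hfc.add hgc)
        hpos hx₀)
    (convex_convexHull ℝ _) ⟨x₀, hsupp hx₀⟩
    (isBounded_convexHull.2 (hfc.add hgc).isCompact.isBounded)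
    (fun x hx => hsupp ((hdata x).symm.trans_ne hx)) hε
  refine ⟨η, hη, fun a b ha hb => ?_⟩
  filter_upwards [hw, ha, hb, eventually_gt_atTop 0] with t hw ha hb ht x hx hgrad
  obtain ⟨e, he⟩ := hw _ ha _ hb x hx
  rw [dirDeriv_space_snd_mul_eq_inner_gradient (fun s => exp (s / 2))
    (hF.contDiffOn.contDiffAt (univ_prod_Ici_mem_nhds ht)), hgrad, inner_zero_left, mul_zero] at he
  exact he rfl

end DampedWave

lemma eventually_mem_Icc_mul_of_tendsto_div {a : ℝ → ℝ} (ha : ∀ t ≥ 0, 0 ≤ a t)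
    (h : Tendsto (fun t => a t / t) atTop (𝓝 0)) {η : ℝ} (hη : 0 < η) :
    ∀ᶠ t in atTop, a t ∈ Icc 0 (η * t) := by
  filter_upwards [h.eventually_le_const hη, eventually_gt_atTop 0] with t hle ht
  exact ⟨ha t ht.le, (div_le_iff₀ ht).1 hle⟩

/-- cf. Lemma `nocritical`. If `ψ, φ` are non-decreasing with
`ψ(0) = φ(0) = 0`, `ψ(t) → ∞`, `ψ(t)/√t → 0`, `φ(t)/t → 0`, and `φ ≥ ψ`, then there is
`T ≥ T₀(φ)` such that for all `t ≥ T` the spatial gradient of `u(·,t)` does not vanish on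
`(CS(h) + φ(t)Bⁿ) \ (CS(h) + ψ(t)Bⁿ)`, where `h = f + g`. -/
theorem no_critical_points_in_annulus (n : ℕ) (hn : 1 ≤ n)
    (f g : EuclideanSpace ℝ (Fin n) → ℝ)
    (hf : ContDiff ℝ (⊤ : ℕ∞) f) (hg : ContDiff ℝ (⊤ : ℕ∞) g)
    (hfc : HasCompactSupport f) (hgc : HasCompactSupport g)
    (hne : f + g ≠ 0) (hpos : ∀ x, 0 ≤ f x + g x)
    (u : EuclideanSpace ℝ (Fin n) → ℝ → ℝ)
    (hreg : ContDiffOn ℝ 2 (fun p : EuclideanSpace ℝ (Fin n) × ℝ => u p.1 p.2) (univ ×ˢ Ici 0))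
    (hpde : ∀ x, ∀ t > (0 : ℝ),
      deriv (deriv (fun s => u x s)) t - lap (fun z => u z t) x
        + deriv (fun s => u x s) t = 0)
    (hu0 : ∀ x, u x 0 = f x)
    (hu1 : ∀ x, derivWithin (fun s => u x s) (Ici 0) 0 = g x)
    (ψ phi : ℝ → ℝ)
    (hψ0 : ψ 0 = 0) (hphi0 : phi 0 = 0)
    (hψmono : MonotoneOn ψ (Ici 0)) (hphimono : MonotoneOn phi (Ici 0))
    (hψnn : ∀ t ≥ (0 : ℝ), 0 ≤ ψ t) (hphinn : ∀ t ≥ (0 : ℝ), 0 ≤ phi t)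
    (hψtop : Tendsto ψ atTop atTop)
    (hψo : Tendsto (fun t => ψ t / Real.sqrt t) atTop (𝓝 0))
    (hphio : Tendsto (fun t => phi t / t) atTop (𝓝 0))
    (hge : ∀ t, ψ t ≤ phi t) :
    ∃ T, T0 f g phi ≤ T ∧ ∀ t ≥ T,
      ∀ x ∈ (CS (f + g) + phi t • closedBall (0 : EuclideanSpace ℝ (Fin n)) 1) \
          (CS (f + g) + ψ t • closedBall (0 : EuclideanSpace ℝ (Fin n)) 1),
        gradient (fun z => u z t) x ≠ 0 := by
  have hu : IsDampedWave fun p => u p.1 p.2 := isDampedWave_of_lap hreg hpde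
  have hvel (x) : velocity (fun p => u p.1 p.2) (x, 0) = g x :=
    (velocity_eq_derivWithin (hreg.differentiableOn two_ne_zero) x).trans (hu1 x)
  obtain ⟨η, hη, hgrad⟩ :=
    no_critical_points_in_annulus_general hu hu0 hvel hfc hgc hne hpos one_pos
  obtain ⟨T, hT⟩ := eventually_atTop.1 ((hgrad ψ phi (hψtop.eventually_ge_atTop 1)
    (eventually_mem_Icc_mul_of_tendsto_div hphinn hphio hη)).and
      (eventually_ge_atTop (T0 f g phi)))
  exact ⟨T, (hT T le_rfl).2, fun t ht => (hT t ht).1⟩
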